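/- arXiv:2509.15438 — 8 statements merged into one kernel-verified Lean document; each statement's English description precedes it below -/
import Mathlib

section
/- Let k be a field, A a commutative k-algebra with a 𝔾ₐ-coaction β, and let y₁,…,y_m ∈ A^{𝔾ₐ} be invariant elements that are linearly independent over k. If x ∈ A satisfies β(x) = x + Σ_{i=1}^{m} c_i(t)·y_i for some polynomials c_i(t) ∈ k[t], then every c_i(t) is an additive polynomial. -/
open Polynomial

/-- Substitute `t ↦ t₁ + t₂` into a polynomial, landing in `R[t₁][t₂]`
(inner variable `t₁`, outer variable `t₂`). -/
noncomputable def coaddSubst {R : Type*} [CommSemiring R] (p : Polynomial R) :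
    Polynomial (Polynomial R) :=
  p.eval₂ ((Polynomial.C : Polynomial R →+* Polynomial (Polynomial R)).comp
      (Polynomial.C : R →+* Polynomial R))
    (Polynomial.C Polynomial.X + Polynomial.X)

/-- A 𝔾ₐ-coaction on a commutative `k`-algebra `A`: a `k`-algebra homomorphism
`β : A → A[t]` satisfying the counit and coassociativity axioms. -/
def IsGaCoaction {k A : Type*} [CommSemiring k] [CommSemiring A] [Algebra k A]
    (β : A →ₐ[k] Polynomial A) : Prop :=
  (∀ a : A, (β a).eval 0 = a) ∧
  (∀ a : A, coaddSubst (β a) = (β a).map β.toRingHom)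

/-- `c(t) ∈ k[t]` is additive: `c(t₁+t₂) = c(t₁) + c(t₂)` in `k[t₁][t₂]`. -/
def IsAdditivePoly {k : Type*} [CommSemiring k] (c : Polynomial k) : Prop :=
  coaddSubst c = Polynomial.C c + c.map (Polynomial.C : k →+* Polynomial k)

theorem coaddSubst_add' {R : Type*} [CommSemiring R] (p q : Polynomial R) :
    coaddSubst (p + q) = coaddSubst p + coaddSubst q := by
  simp [coaddSubst, Polynomial.eval₂_add]

theorem coaddSubst_C' {R : Type*} [CommSemiring R] (a : R) :
    coaddSubst (Polynomial.C a) = Polynomial.C (Polynomial.C a) := by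
  simp [coaddSubst]

theorem coaddSubst_mul' {R : Type*} [CommSemiring R] (p q : Polynomial R) :
    coaddSubst (p * q) = coaddSubst p * coaddSubst q := by
  simp [coaddSubst, Polynomial.eval₂_mul]

theorem coaddSubst_sum' {R ι : Type*} [CommSemiring R] (s : Finset ι) (p : ι → Polynomial R) :
    coaddSubst (∑ i ∈ s, p i) = ∑ i ∈ s, coaddSubst (p i) := by
  simp [coaddSubst, Polynomial.eval₂_finsetSum]

theorem coaddSubst_map' {R S : Type*} [CommSemiring R] [CommSemiring S] (f : R →+* S)
    (p : Polynomial R) :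
    coaddSubst (p.map f) = (coaddSubst p).map (Polynomial.mapRingHom f) := by
  induction p using Polynomial.induction_on' with
  | add p q hp hq => rw [Polynomial.map_add, coaddSubst_add', hp, hq, coaddSubst_add',
      Polynomial.map_add]
  | monomial n a => simp [coaddSubst, Polynomial.eval₂_monomial]

/-- if `y₁,…,y_m ∈ A^{𝔾ₐ}` are `k`-linearly independent invariants
and `β(x) = x + ∑ c_i(t)·y_i`, then every `c_i(t)` is additive. -/
theorem stmt1 {k A : Type*} [Field k] [CommRing A] [Algebra k A]
    (β : A →ₐ[k] Polynomial A) (hβ : IsGaCoaction β)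
    {m : ℕ} (y : Fin m → A)
    (hy : ∀ i, β (y i) = Polynomial.C (y i))
    (hli : LinearIndependent k y)
    (c : Fin m → Polynomial k) (x : A)
    (hx : β x = Polynomial.C x +
      ∑ i : Fin m, (c i).map (algebraMap k A) * Polynomial.C (y i)) :
    ∀ i : Fin m, IsAdditivePoly (c i) := by
  have h := hβ.2 x
  set F := Polynomial.mapRingHom (algebraMap k A) with hF
  have h2 : ∀ i, ((c i).map (algebraMap k A)).map β.toRingHom
      = ((c i).map (Polynomial.C : k →+* Polynomial k)).map F := by
    intro i
    rw [Polynomial.map_map, Polynomial.map_map]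
    congr 1
    ext r
    simp [hF, Polynomial.algebraMap_apply]
  have hR : (β x).map β.toRingHom = Polynomial.C (Polynomial.C x) +
      ∑ i, (Polynomial.C (c i) + (c i).map (Polynomial.C : k →+* Polynomial k)).map F
        * Polynomial.C (Polynomial.C (y i)) := by
    conv_lhs => rw [hx]
    rw [Polynomial.map_add, Polynomial.map_sum]
    simp only [Polynomial.map_mul, h2, Polynomial.map_C, Polynomial.map_add, add_mul,
      Finset.sum_add_distrib]
    have e1 : β.toRingHom x = β x := rfl
    have e2 : ∀ i, β.toRingHom (y i) = Polynomial.C (y i) := hy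
    simp only [e1, e2, hx, hF, map_add, map_sum, map_mul, Polynomial.coe_mapRingHom]
    ring
  have hL : coaddSubst (β x) = Polynomial.C (Polynomial.C x) +
      ∑ i, (coaddSubst (c i)).map F * Polynomial.C (Polynomial.C (y i)) := by
    rw [hx, coaddSubst_add', coaddSubst_C', coaddSubst_sum']
    simp only [coaddSubst_mul', coaddSubst_C', coaddSubst_map', hF]
  rw [hL, hR] at h
  have h3 := add_left_cancel h
  intro i
  unfold IsAdditivePoly
  ext n j
  have h4 := congrArg (fun p => (p.coeff n).coeff j) h3
  simp only [Polynomial.finsetSum_coeff, Polynomial.coeff_mul_C, Polynomial.coeff_map, hF,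
    Polynomial.coe_mapRingHom] at h4
  rw [← sub_eq_zero]
  refine Fintype.linearIndependent_iff.1 hli (fun i => ((coaddSubst (c i)).coeff n).coeff j -
    ((Polynomial.C (c i) + (c i).map (Polynomial.C : k →+* Polynomial k)).coeff n).coeff j) ?_ i
  simp only [Algebra.smul_def, map_sub, sub_mul, Finset.sum_sub_distrib]
  rw [sub_eq_zero]
  exact h4
end

section
/- Let k be an algebraically closed field and A a finitely generated integral domain over k with a 𝔾ₐ-coaction β. Suppose (g₁,h₁) is a c₁(t)-pair with h₁ ≠ 0 and (g₂,h₂) is a c₂(t)-pair with h₂ ≠ 0, where c₁(t), c₂(t) are additive polynomials. If b₁(t), b₂(t) are additive polynomials and b(t) := b₁(c₁(t)) + b₂(c₂(t)), then there exist g ∈ A and e ∈ ℕ such that (g, (h₁h₂)^e) is a b(t)-pair, i.e. β(g) = g + b(t)·(h₁h₂)^e in A[t]. -/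
open Polynomial

/-- Given an additive polynomial `b(t)`, a `b(t)`-pair is `(g,h)` with `h`
invariant and `β(g) = g + b(t)·h` in `A[t]`. -/
def IsPair {k A : Type*} [CommSemiring k] [CommSemiring A] [Algebra k A]
    (β : A →ₐ[k] Polynomial A) (b : Polynomial k) (g h : A) : Prop :=
  β h = Polynomial.C h ∧
    β g = Polynomial.C g + b.map (algebraMap k A) * Polynomial.C h

/-- Additive polynomials are additive functions on every algebra. -/
theorem additive_aeval {k K : Type*} [CommRing k] [CommRing K] [Algebra k K]
    {b : Polynomial k} (hb : IsAdditivePoly b) (x y : K) :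
    aeval (x + y) b = aeval x b + aeval y b := by
  have h := congrArg (Polynomial.eval₂ (aeval x : Polynomial k →ₐ[k] K).toRingHom y) hb
  have e1 : Polynomial.eval₂ (aeval x : Polynomial k →ₐ[k] K).toRingHom y (coaddSubst b)
      = aeval (x + y) b := by
    unfold coaddSubst
    rw [← Polynomial.coe_eval₂RingHom, Polynomial.hom_eval₂, Polynomial.aeval_def]
    congr 1
    · ext a
      simp
    · simp
  rw [e1] at h
  rw [h, Polynomial.eval₂_add, Polynomial.eval₂_C, Polynomial.eval₂_map, Polynomial.aeval_def y]
  congr 2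
  ext a
  simp

theorem homog_field {k K : Type*} [Field k] [Field K] [Algebra k K]
    (b : Polynomial k) (x h : K) (hh : h ≠ 0) :
    ∑ i ∈ Finset.range (b.natDegree + 1),
      algebraMap k K (b.coeff i) * x ^ i * h ^ (b.natDegree - i)
      = h ^ b.natDegree * aeval (x / h) b := by
  rw [Polynomial.aeval_eq_sum_range, Finset.mul_sum]
  refine Finset.sum_congr rfl fun i hi => ?_
  have hi' : i ≤ b.natDegree := Nat.lt_succ_iff.mp (Finset.mem_range.mp hi)
  rw [Algebra.smul_def, div_pow, ← pow_sub_mul_pow h hi']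
  field_simp

theorem homog_add {k R : Type*} [Field k] [CommRing R] [IsDomain R] [Algebra k R]
    {b : Polynomial k} (hb : IsAdditivePoly b) (x y h : R) (hh : h ≠ 0) :
    ∑ i ∈ Finset.range (b.natDegree + 1),
      algebraMap k R (b.coeff i) * (x + y * h) ^ i * h ^ (b.natDegree - i)
    = ∑ i ∈ Finset.range (b.natDegree + 1),
      algebraMap k R (b.coeff i) * x ^ i * h ^ (b.natDegree - i)
      + aeval y b * h ^ b.natDegree := by
  apply IsFractionRing.injective R (FractionRing R)
  have hK : algebraMap R (FractionRing R) h ≠ 0 := by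
    simpa using hh
  simp only [map_add, map_sum, map_mul, map_pow, ← IsScalarTower.algebraMap_apply]
  rw [← Polynomial.aeval_algebraMap_apply, homog_field _ _ _ hK, homog_field _ _ _ hK, add_div,
    mul_div_cancel_right₀ _ hK, additive_aeval hb]
  ring

theorem pair_comp {k A : Type*} [Field k] [CommRing A] [IsDomain A] [Algebra k A]
    (β : A →ₐ[k] Polynomial A) {b c : Polynomial k} (hb : IsAdditivePoly b) {g h : A}
    (hh : h ≠ 0) (hp : IsPair β c g h) :
    ∃ G, IsPair β (b.comp c) G (h ^ b.natDegree) := by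
  obtain ⟨h1, h2⟩ := hp
  refine ⟨∑ i ∈ Finset.range (b.natDegree + 1),
      algebraMap k A (b.coeff i) * g ^ i * h ^ (b.natDegree - i), by simp [h1], ?_⟩
  have hC : (Polynomial.C h : Polynomial A) ≠ 0 := by simpa using hh
  have key := homog_add hb (Polynomial.C g) (c.map (algebraMap k A)) (Polynomial.C h) hC
  have ea : aeval (c.map (algebraMap k A)) b = (b.comp c).map (algebraMap k A) := by
    rw [Polynomial.map_comp, Polynomial.comp, Polynomial.eval₂_map, Polynomial.aeval_def]
    rfl
  rw [ea] at key
  simp only [map_sum, map_mul, map_pow, h1, h2, AlgHom.commutes]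
  exact key

theorem pair_mul {k A : Type*} [Field k] [CommRing A] [Algebra k A]
    (β : A →ₐ[k] Polynomial A) {b : Polynomial k} {g h u : A}
    (hp : IsPair β b g h) (hu : β u = Polynomial.C u) :
    IsPair β b (g * u) (h * u) := by
  obtain ⟨h1, h2⟩ := hp
  refine ⟨by simp [h1, hu], ?_⟩
  simp only [map_mul, h2, hu]
  ring

/-- combination of pairs: if `(g₁,h₁)` is a `c₁(t)`-pair and
`(g₂,h₂)` is a `c₂(t)`-pair with `h₁, h₂ ≠ 0`, and `b₁, b₂` are additive, then
setting `b(t) = b₁(c₁(t)) + b₂(c₂(t))` there exist `g` and `e` such that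
`(g, (h₁h₂)^e)` is a `b(t)`-pair. -/
theorem stmt3 {k : Type*} [Field k] [IsAlgClosed k]
    {A : Type*} [CommRing A] [IsDomain A] [Algebra k A]
    (hfg : Algebra.FiniteType k A)
    (β : A →ₐ[k] Polynomial A) (hβ : IsGaCoaction β)
    (c₁ c₂ : Polynomial k) (hc₁ : IsAdditivePoly c₁) (hc₂ : IsAdditivePoly c₂)
    (g₁ h₁ g₂ h₂ : A) (hh₁ : h₁ ≠ 0) (hh₂ : h₂ ≠ 0)
    (hp₁ : IsPair β c₁ g₁ h₁) (hp₂ : IsPair β c₂ g₂ h₂)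
    (b₁ b₂ : Polynomial k) (hb₁ : IsAdditivePoly b₁) (hb₂ : IsAdditivePoly b₂) :
    ∃ (g : A) (e : ℕ), IsPair β (b₁.comp c₁ + b₂.comp c₂) g ((h₁ * h₂) ^ e) := by
  obtain ⟨G₁, q₁⟩ := pair_comp β hb₁ hh₁ hp₁
  obtain ⟨G₂, q₂⟩ := pair_comp β hb₂ hh₂ hp₂
  have r₁ := pair_mul β q₁ (u := h₁ ^ b₂.natDegree * h₂ ^ (b₁.natDegree + b₂.natDegree))
    (by simp [hp₁.1, hp₂.1])
  have r₂ := pair_mul β q₂ (u := h₂ ^ b₁.natDegree * h₁ ^ (b₁.natDegree + b₂.natDegree))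
    (by simp [hp₁.1, hp₂.1])
  have s₁ : h₁ ^ b₁.natDegree * (h₁ ^ b₂.natDegree * h₂ ^ (b₁.natDegree + b₂.natDegree))
      = (h₁ * h₂) ^ (b₁.natDegree + b₂.natDegree) := by ring
  have s₂ : h₂ ^ b₂.natDegree * (h₂ ^ b₁.natDegree * h₁ ^ (b₁.natDegree + b₂.natDegree))
      = (h₁ * h₂) ^ (b₁.natDegree + b₂.natDegree) := by ring
  rw [s₁] at r₁
  rw [s₂] at r₂
  refine ⟨G₁ * (h₁ ^ b₂.natDegree * h₂ ^ (b₁.natDegree + b₂.natDegree)) +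
    G₂ * (h₂ ^ b₁.natDegree * h₁ ^ (b₁.natDegree + b₂.natDegree)),
    b₁.natDegree + b₂.natDegree, r₁.1, ?_⟩
  rw [map_add β, r₁.2, r₂.2, Polynomial.map_add, Polynomial.C_add]
  ring
end

section
/- Let k be an algebraically closed field of characteristic p > 0 and let c₁(t), c₂(t) ∈ k[t] be additive polynomials that are linearly independent over k. Let β be the 𝔾ₐ-coaction on A = k[x₁,x₂,x₃] determined by β(x₁) = x₁, β(x₂) = x₂, β(x₃) = x₃ + c₁(t)·x₁ + c₂(t)·x₂. Then A admits no nontrivial pair: whenever g ∈ A, h ∈ A^{𝔾ₐ}, and b(t) ∈ k[t] is a nonzero additive polynomial with β(g) = g + b(t)·h, one has h = 0. (In particular the large pedestal ideal of A is zero.) -/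
open Polynomial

/-- A divisor of a polynomial with coefficients in an algebraically closed subfield is
a scalar multiple of a polynomial over the subfield. -/
theorem dvd_map_eq_C_mul_map {k K : Type*} [Field k] [IsAlgClosed k] [Field K] (i : k →+* K)
    (b : k[X]) (hb : b ≠ 0) (P : K[X]) (hP : P ∣ b.map i) :
    ∃ f : k[X], P = C P.leadingCoeff * f.map i := by
  have hb0 : b.map i ≠ 0 := (Polynomial.map_ne_zero_iff i.injective).2 hb
  have hP0 : P ≠ 0 := ne_zero_of_dvd_ne_zero hb0 hP
  have hlc : P.leadingCoeff ≠ 0 := leadingCoeff_ne_zero.2 hP0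
  have hmon : (P * C P.leadingCoeff⁻¹).Monic := monic_mul_leadingCoeff_inv hP0
  have hdvd : P * C P.leadingCoeff⁻¹ ∣ b.map i := by
    obtain ⟨q, hq⟩ := hP
    refine ⟨C P.leadingCoeff * q, ?_⟩
    have : (C P.leadingCoeff⁻¹ * C P.leadingCoeff : K[X]) = 1 := by
      rw [← C_mul, inv_mul_cancel₀ hlc, C_1]
    rw [hq]
    linear_combination (-P * q) * this
  have hbs : b.Splits := IsAlgClosed.splits b
  have hs : (P * C P.leadingCoeff⁻¹).Splits := (hbs.map i).of_dvd hb0 hdvd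
  have hl := hs.mem_lift_of_roots_mem_range hmon i (by
    intro a ha
    have hr : (b.map i).IsRoot a := (isRoot_of_mem_roots ha).dvd hdvd
    apply hbs.mem_range_of_isRoot hb
    simpa [IsRoot, eval_map] using hr)
  obtain ⟨f, hf⟩ := (mem_lifts _).1 hl
  refine ⟨f, ?_⟩
  have : (C P.leadingCoeff⁻¹ * C P.leadingCoeff : K[X]) = 1 := by
    rw [← C_mul, inv_mul_cancel₀ hlc, C_1]
  rw [hf]
  linear_combination (-P) * this

theorem lin_coeffs_eq {k : Type*} [Field k] (a b a' b' r : k)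
    (h : (MvPolynomial.C a * MvPolynomial.X 0 + MvPolynomial.C b * MvPolynomial.X 1 :
        MvPolynomial (Fin 3) k) =
      (MvPolynomial.C a' * MvPolynomial.X 0 + MvPolynomial.C b' * MvPolynomial.X 1) *
        MvPolynomial.C r) : a = a' * r ∧ b = b' * r := by
  have h0 := congrArg (MvPolynomial.eval (fun i : Fin 3 => if i = 0 then (1 : k) else 0)) h
  have h1 := congrArg (MvPolynomial.eval (fun i : Fin 3 => if i = 1 then (1 : k) else 0)) h
  simp at h0 h1
  exact ⟨h0, h1⟩

/-- Example: for the coaction on `k[x₁,x₂,x₃]` with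
`β(x₃) = x₃ + c₁(t)x₁ + c₂(t)x₂`, where `c₁, c₂` are `k`-linearly independent
additive polynomials, there is no nontrivial pair: any `b(t)`-pair `(g,h)` with
`b(t)` a nonzero additive polynomial has `h = 0`.  (So the large pedestal ideal
is zero.) -/
theorem stmt8 {k : Type*} [Field k] [IsAlgClosed k]
    (p : ℕ) (hp : p.Prime) (hchar : CharP k p)
    (c₁ c₂ : Polynomial k) (hc₁ : IsAdditivePoly c₁) (hc₂ : IsAdditivePoly c₂)
    (hli : LinearIndependent k ![c₁, c₂])
    (β : MvPolynomial (Fin 3) k →ₐ[k] Polynomial (MvPolynomial (Fin 3) k))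
    (hβ : IsGaCoaction β)
    (h1 : β (MvPolynomial.X 0) = Polynomial.C (MvPolynomial.X 0))
    (h2 : β (MvPolynomial.X 1) = Polynomial.C (MvPolynomial.X 1))
    (h3 : β (MvPolynomial.X 2) = Polynomial.C (MvPolynomial.X 2) +
      c₁.map (algebraMap k (MvPolynomial (Fin 3) k)) * Polynomial.C (MvPolynomial.X 0) +
      c₂.map (algebraMap k (MvPolynomial (Fin 3) k)) * Polynomial.C (MvPolynomial.X 1)) :
    ∀ (g h : MvPolynomial (Fin 3) k) (b : Polynomial k),
      IsAdditivePoly b → b ≠ 0 →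
      β h = Polynomial.C h →
      β g = Polynomial.C g +
        b.map (algebraMap k (MvPolynomial (Fin 3) k)) * Polynomial.C h →
      h = 0 := by
  intro g h b _ hb _ hg
  by_contra hh
  let A := MvPolynomial (Fin 3) k
  set F : A[X] := c₁.map (algebraMap k A) * C (MvPolynomial.X 0) +
      c₂.map (algebraMap k A) * C (MvPolynomial.X 1) with hF
  -- `F` divides `β a - a` for every `a`
  have key : ∀ a : A, F ∣ β a - C a := by
    intro a
    induction a using MvPolynomial.induction_on with
    | C r =>
      have : β (MvPolynomial.C r) = C (MvPolynomial.C r) := β.commutes r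
      rw [this, sub_self]
      exact dvd_zero _
    | add p q hp hq =>
      rw [map_add, C_add]
      convert dvd_add hp hq using 1
      ring
    | mul_X q n hq =>
      have hX : F ∣ β (MvPolynomial.X n) - C (MvPolynomial.X n) := by
        fin_cases n
        · change F ∣ β (MvPolynomial.X 0) - C (MvPolynomial.X 0)
          rw [h1, sub_self]; exact dvd_zero _
        · change F ∣ β (MvPolynomial.X 1) - C (MvPolynomial.X 1)
          rw [h2, sub_self]; exact dvd_zero _
        · change F ∣ β (MvPolynomial.X 2) - C (MvPolynomial.X 2)
          rw [h3]
          refine ⟨1, ?_⟩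
          rw [hF]; ring
      rw [map_mul, C_mul]
      convert dvd_add (hq.mul_right (β (MvPolynomial.X n))) (hX.mul_left (C q)) using 1
      ring
  have hdiv : F ∣ b.map (algebraMap k A) * C h := by
    have := key g
    rwa [hg, add_sub_cancel_left] at this
  let K := FractionRing A
  let j : A →+* K := algebraMap A K
  have hj : Function.Injective j := IsFractionRing.injective A K
  have hdK : F.map j ∣ b.map (j.comp (algebraMap k A)) := by
    have h' := Polynomial.map_dvd j hdiv
    rw [Polynomial.map_mul, Polynomial.map_map, map_C] at h'
    have hu : IsUnit (C (j h)) := isUnit_C.2 (isUnit_iff_ne_zero.2 (by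
      rw [Ne, map_eq_zero_iff j hj]; exact hh))
    exact (hu.dvd_mul_right).1 h'
  obtain ⟨f, hf⟩ := dvd_map_eq_C_mul_map _ b hb _ hdK
  have hFc : ∀ n, F.coeff n =
      MvPolynomial.C (c₁.coeff n) * MvPolynomial.X 0 +
      MvPolynomial.C (c₂.coeff n) * MvPolynomial.X 1 := by
    intro n
    rw [hF, coeff_add, coeff_mul_C, coeff_mul_C, coeff_map, coeff_map]
    rfl
  obtain ⟨N, hN⟩ : ∃ N, (F.map j).leadingCoeff = j (F.coeff N) :=
    ⟨(F.map j).natDegree, by rw [leadingCoeff, coeff_map]⟩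
  have hco : ∀ n, F.coeff n = F.coeff N * MvPolynomial.C (f.coeff n) := by
    intro n
    apply hj
    have := congrArg (fun q => q.coeff n) hf
    simp only [coeff_map, coeff_C_mul, hN] at this
    rw [this, map_mul]
    rfl
  have e1 : ∀ n, c₁.coeff n = c₁.coeff N * f.coeff n := by
    intro n
    have := hco n
    rw [hFc, hFc] at this
    exact (lin_coeffs_eq _ _ _ _ _ this).1
  have e2 : ∀ n, c₂.coeff n = c₂.coeff N * f.coeff n := by
    intro n
    have := hco n
    rw [hFc, hFc] at this
    exact (lin_coeffs_eq _ _ _ _ _ this).2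
  rw [LinearIndependent.pair_iff] at hli
  have h0 := hli (c₂.coeff N) (-c₁.coeff N) (by
    ext n
    simp only [coeff_add, coeff_smul, smul_eq_mul, coeff_zero]
    rw [e1 n, e2 n]
    ring)
  have hc0 : c₁ = 0 := by
    ext n
    rw [e1 n, neg_eq_zero.1 h0.2, zero_mul, coeff_zero]
  have := hli 1 0 (by simp [hc0])
  exact one_ne_zero this.1
end

section
/- Let k be an algebraically closed field and let β be a linear, upper-triangular 𝔾ₐ-coaction on A = k[x₁,…,xₙ] (so β(x_i) = x_i + Σ_{j<i} q_{i,j}(t)·x_j). Suppose the large pedestal ideal of A is zero, i.e. whenever g ∈ A, h ∈ A^{𝔾ₐ}, and c(t) is a nonzero additive polynomial with β(g) = g + c(t)·h, then h = 0. Then A^{𝔾ₐ} equals the k-subalgebra of A generated by the invariant linear forms, i.e. by {ℓ ∈ span_k(x₁,…,xₙ) : β(ℓ) = ℓ}. -/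
open Polynomial

theorem coaddSubst_coeff {R : Type*} [CommSemiring R] (p : R[X]) (m j : ℕ) :
    ((coaddSubst p).coeff m).coeff j = (m + j).choose m * p.coeff (m + j) := by
  unfold coaddSubst
  induction p using Polynomial.induction_on' with
  | add p q hp hq => simp only [eval₂_add, coeff_add, hp, hq, mul_add]
  | monomial n a =>
    rw [eval₂_monomial, add_comm (C X) X]
    simp only [RingHom.comp_apply, coeff_C_mul, coeff_X_add_C_pow, coeff_monomial]
    rw [mul_comm (X ^ _), ← Polynomial.C_eq_natCast, coeff_C_mul, coeff_X_pow]
    by_cases h : n = m + j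
    · subst h
      simp [mul_comm]
    · rw [if_neg h]
      by_cases h2 : n < m
      · simp [Nat.choose_eq_zero_of_lt h2]
      · rw [if_neg (by omega)]; simp

theorem isAdditivePoly_of_coeff {k : Type*} [CommSemiring k] (c : k[X]) (h0 : c.coeff 0 = 0)
    (h : ∀ m j, 0 < m → 0 < j → ((m + j).choose m : k) * c.coeff (m + j) = 0) :
    IsAdditivePoly c := by
  unfold IsAdditivePoly
  ext m j
  rw [coaddSubst_coeff, coeff_add, coeff_add, coeff_map, coeff_C, coeff_C]
  rcases Nat.eq_zero_or_pos m with rfl | hm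
  · rcases Nat.eq_zero_or_pos j with rfl | hj
    · simp [h0]
    · simp [hj.ne']
  · rcases Nat.eq_zero_or_pos j with rfl | hj
    · simp [hm.ne']
    · rw [h m j hm hj]; simp [hm.ne', hj.ne']

section Gen
variable {k A : Type*} [CommRing k] [CommRing A] [Algebra k A]
    {β : A →ₐ[k] A[X]}

theorem coact_coeff (hβ : IsGaCoaction β) (a : A) (m j : ℕ) :
    (β ((β a).coeff m)).coeff j = (m + j).choose m * (β a).coeff (m + j) := by
  rw [← coaddSubst_coeff, hβ.2 a, coeff_map]; rfl

theorem coact_coeff_zero (hβ : IsGaCoaction β) (a : A) : (β a).coeff 0 = a := by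
  rw [coeff_zero_eq_eval_zero, hβ.1]

theorem coact_eq_C (hβ : IsGaCoaction β) (a : A) (h : (β a).natDegree = 0) : β a = C a := by
  rw [eq_C_of_natDegree_eq_zero h, coact_coeff_zero hβ]

theorem coact_coeff_natDegree_le (hβ : IsGaCoaction β) (a : A) (m : ℕ) :
    (β ((β a).coeff m)).natDegree ≤ (β a).natDegree - m := by
  rw [natDegree_le_iff_coeff_eq_zero]
  intro N hN
  rw [coact_coeff hβ, coeff_eq_zero_of_natDegree_lt (by omega), mul_zero]

theorem choose_aux (d qq r : ℕ) (hr : r < d)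
    (h : ∀ m, 0 < m → m < d → ((d.choose m : ℕ) : k) = 0) :
    (((d * qq + r).choose r : ℕ) : k) = 1 := by
  have h1 : (X : k[X]) ^ d ∣ (X + 1) ^ d - 1 := by
    rw [X_pow_dvd_iff]
    intro m hm
    rw [coeff_sub, coeff_X_add_one_pow, coeff_one]
    rcases Nat.eq_zero_or_pos m with rfl | h0
    · simp
    · rw [h m h0 hm]; simp [h0.ne']
  have h2 : (X : k[X]) ^ d ∣ (X + 1) ^ (d * qq + r) - (X + 1) ^ r := by
    have : ((X + 1) ^ (d * qq + r) - (X + 1) ^ r : k[X])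
      = (((X + 1) ^ d) ^ qq - 1 ^ qq) * (X + 1) ^ r := by ring
    rw [this]
    exact Dvd.dvd.mul_right (h1.trans (sub_dvd_pow_sub_pow _ _ _)) _
  rw [X_pow_dvd_iff] at h2
  have := h2 r hr
  rw [coeff_sub, coeff_X_add_one_pow, coeff_X_add_one_pow, Nat.choose_self, sub_eq_zero] at this
  simpa using this
end Gen

theorem exists_min {k A : Type*} [Field k] [CommRing A] [IsDomain A] [Algebra k A]
    {β : A →ₐ[k] A[X]} (hβ : IsGaCoaction β) (hne : ∃ g, β g ≠ C g) :
    ∃ f : A, 0 < (β f).natDegree ∧ (∀ m, 0 < m → β ((β f).coeff m) = C ((β f).coeff m)) ∧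
      ∀ g, 0 < (β g).natDegree → (β f).natDegree ∣ (β g).natDegree := by
  classical
  have hex : ∃ d, ∃ g, 0 < (β g).natDegree ∧ (β g).natDegree = d := by
    obtain ⟨g, hg⟩ := hne
    exact ⟨_, g, Nat.pos_of_ne_zero fun h => hg (coact_eq_C hβ g h), rfl⟩
  obtain ⟨f, hf, hfd⟩ := Nat.find_spec hex
  have hmin : ∀ g, (β g).natDegree < (β f).natDegree → (β g).natDegree = 0 := by
    intro g hg
    by_contra h
    exact Nat.find_min hex (hfd ▸ hg) ⟨g, Nat.pos_of_ne_zero h, rfl⟩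
  have hinv : ∀ m, 0 < m → β ((β f).coeff m) = C ((β f).coeff m) := by
    intro m hm
    apply coact_eq_C hβ
    apply hmin
    have := coact_coeff_natDegree_le hβ f m
    omega
  refine ⟨f, hf, hinv, ?_⟩
  have hch : ∀ m, 0 < m → m < (β f).natDegree → (((β f).natDegree.choose m : ℕ) : A) = 0 := by
    intro m h0 hm
    have h1 := coact_coeff hβ f m ((β f).natDegree - m)
    rw [hinv m h0, coeff_C, if_neg (by omega), Nat.add_sub_cancel' hm.le] at h1
    have h2 : (β f).coeff (β f).natDegree ≠ 0 := by
      rw [coeff_natDegree, leadingCoeff_ne_zero]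
      rintro h; simp [h] at hf
    exact (mul_eq_zero.mp h1.symm).resolve_right h2
  intro g hg
  set d := (β f).natDegree with hd
  by_contra hdvd
  have hr0 : 0 < (β g).natDegree % d :=
    Nat.pos_of_ne_zero fun h => hdvd (Nat.dvd_of_mod_eq_zero h)
  have hrd : (β g).natDegree % d < d := Nat.mod_lt _ hf
  set e := (β g).natDegree with he
  have hqr := Nat.div_add_mod e d
  have h1 := choose_aux (k := A) d (e / d) (e % d) hrd hch
  have h2 := coact_coeff hβ g (d * (e / d)) (e % d)
  have h3 := coact_coeff_natDegree_le hβ g (d * (e / d))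
  have h4 := hmin ((β g).coeff (d * (e / d))) (by omega)
  rw [coeff_eq_zero_of_natDegree_lt (by omega), Nat.choose_symm_add, h1, hqr, one_mul] at h2
  have h5 : β g = 0 := by
    rw [← leadingCoeff_eq_zero]; exact h2.symm
  simp [he, h5] at hg

theorem fixed_of_root {k A E : Type*} [Field k] [CommRing A] [IsDomain A] [Algebra k A]
    [Field E] [Algebra A E] (hinj : Function.Injective (algebraMap A E))
    {β : A →ₐ[k] A[X]} (hβ : IsGaCoaction β) (f : A) (hf : 0 < (β f).natDegree)
    (hinv : ∀ m, 0 < m → β ((β f).coeff m) = C ((β f).coeff m))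
    (hdvd : ∀ g, 0 < (β g).natDegree → (β f).natDegree ∣ (β g).natDegree)
    (τ : E) (hτ : aeval τ (β f) = algebraMap A E f) (g : A) :
    aeval τ (β g) = algebraMap A E g := by
  induction hN : (β g).natDegree using Nat.strong_induction_on generalizing g with
  | _ e ih =>
    rcases Nat.eq_zero_or_pos e with rfl | he
    · rw [coact_eq_C hβ g hN, aeval_C]
    obtain ⟨r, hr⟩ := hdvd g (hN ▸ he)
    set d := (β f).natDegree with hd
    have hfd0 : (β f).coeff d ≠ 0 := by
      rw [hd, coeff_natDegree, leadingCoeff_ne_zero]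
      intro h; simp [hd, h] at hf
    have hr0 : 0 < r := by
      rcases Nat.eq_zero_or_pos r with rfl | h
      · simp at hr; omega
      · exact h
    have hge : β ((β g).coeff e) = C ((β g).coeff e) := by
      apply coact_eq_C hβ
      have := coact_coeff_natDegree_le hβ g e
      omega
    set b := (β f).coeff d with hb
    have hbC : β b = C b := hinv d hf
    have hg' : β (b ^ r * g - (β g).coeff e * f ^ r) =
        C (b ^ r) * β g - C ((β g).coeff e) * (β f) ^ r := by
      simp only [map_sub, map_mul, map_pow, hge, hbC]
    have hdeg : (β (b ^ r * g - (β g).coeff e * f ^ r)).natDegree < e := by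
      have hle : (β (b ^ r * g - (β g).coeff e * f ^ r)).natDegree ≤ e := by
        rw [hg']
        refine (natDegree_sub_le _ _).trans (max_le ?_ ?_)
        · exact (natDegree_C_mul_le _ _).trans hN.le
        · refine (natDegree_C_mul_le _ _).trans ?_
          rw [natDegree_pow, ← hd, ← hN, hr, mul_comm]
      refine lt_of_le_of_ne hle fun heq => ?_
      have h0 : (β (b ^ r * g - (β g).coeff e * f ^ r)).coeff e = 0 := by
        rw [hg', coeff_sub, coeff_C_mul, coeff_C_mul]
        have : ((β f) ^ r).coeff e = b ^ r := by
          rw [← hN, hr, mul_comm, hb, coeff_pow_of_natDegree_le le_rfl]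
        rw [this]; ring
      generalize β (b ^ r * g - (β g).coeff e * f ^ r) = w at h0 heq
      subst heq
      rw [coeff_natDegree, leadingCoeff_eq_zero] at h0
      simp [h0] at he
    have h1 := ih _ hdeg _ rfl
    rw [hg'] at h1
    simp only [map_sub, map_mul, map_pow, aeval_C, hτ] at h1
    have h2 : algebraMap A E b ^ r ≠ 0 :=
      pow_ne_zero _ ((map_ne_zero_iff _ hinj).mpr hfd0)
    exact mul_left_cancel₀ h2 (sub_left_injective h1)

theorem exists_tau {k A E : Type*} [Field k] [IsAlgClosed k] [CommRing A] [IsDomain A]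
    [Algebra k A] [Field E] [IsAlgClosed E] [Algebra k E] [Algebra A E] [IsScalarTower k A E]
    (hinj : Function.Injective (algebraMap A E))
    {β : A →ₐ[k] A[X]} (hβ : IsGaCoaction β) (hne : ∃ g, β g ≠ C g)
    (hped : ∀ (g h : A) (c : Polynomial k),
      IsAdditivePoly c → c ≠ 0 → β h = Polynomial.C h →
      β g = Polynomial.C g + c.map (algebraMap k A) * Polynomial.C h → h = 0) :
    ∃ τ : E, Transcendental k τ ∧ ∀ g, aeval τ (β g) = algebraMap A E g := by
  obtain ⟨f, hf, hinv, hdvd⟩ := exists_min hβ hne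
  set d := (β f).natDegree with hd
  have hfd0 : (β f).coeff d ≠ 0 := by
    rw [hd, coeff_natDegree, leadingCoeff_ne_zero]
    intro h; simp [hd, h] at hf
  set P : A[X] := β f - C f with hP
  have hPd : P.natDegree = d := by rw [hP, natDegree_sub_C]
  have hPm : ∀ m, 0 < m → P.coeff m = (β f).coeff m := by
    intro m hm
    rw [hP, coeff_sub, coeff_C, if_neg hm.ne', sub_zero]
  have hP0 : P.coeff 0 = 0 := by rw [hP, coeff_sub, coact_coeff_zero hβ]; simp
  suffices h : ∃ τ ∈ (P.map (algebraMap A E)).roots, τ ∉ Set.range (algebraMap k E) by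
    obtain ⟨τ, hτ, hτk⟩ := h
    refine ⟨τ, ?_, fixed_of_root hinj hβ f hf hinv hdvd τ ?_⟩
    · intro halg
      exact hτk (minpoly.mem_range_of_degree_eq_one k τ
        (IsAlgClosed.degree_eq_one_of_irreducible k (minpoly.irreducible halg.isIntegral)))
    · have := isRoot_of_mem_roots hτ
      rw [IsRoot, eval_map_algebraMap, hP, map_sub, aeval_C, sub_eq_zero] at this
      exact this
  by_contra! hcon
  have hs : ∃ s : Multiset k, s.map (algebraMap k E) = (P.map (algebraMap A E)).roots := by
    have : CanLift E k (algebraMap k E) (· ∈ Set.range (algebraMap k E)) := ⟨fun _ h => h⟩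
    have := Multiset.canLift (algebraMap k E) (· ∈ Set.range (algebraMap k E))
    exact this.prf _ hcon
  obtain ⟨s, hs⟩ := hs
  set c : k[X] := (s.map (fun a => X - C a)).prod with hc
  have hPc : P = C ((β f).coeff d) * c.map (algebraMap k A) := by
    apply map_injective _ hinj
    rw [Polynomial.map_mul, map_map, ← IsScalarTower.algebraMap_eq, map_C]
    have h1 := (IsAlgClosed.splits (P.map (algebraMap A E))).eq_prod_roots
    rw [← hs, leadingCoeff_map_of_injective hinj, leadingCoeff, hPd, hPm d hf] at h1
    rw [h1, hc, Polynomial.map_multiset_prod]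
    simp [Multiset.map_map]
  have hcm : ∀ m, P.coeff m = (β f).coeff d * algebraMap k A (c.coeff m) := by
    intro m; rw [hPc, coeff_C_mul, coeff_map]
  have hkA : Function.Injective (algebraMap k A) := (algebraMap k A).injective
  refine hfd0 (hped f ((β f).coeff d) c ?_ ?_ (hinv d hf) ?_)
  · apply isAdditivePoly_of_coeff
    · have := hcm 0
      rw [hP0] at this
      have := (mul_eq_zero.mp this.symm).resolve_left hfd0
      exact hkA (by simpa using this)
    · intro m j hm hj
      have h1 := coact_coeff hβ f m j
      rw [hinv m hm, coeff_C, if_neg hj.ne', ← hPm _ (by omega), hcm, mul_left_comm] at h1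
      have := (mul_eq_zero.mp h1.symm).resolve_left hfd0
      exact hkA (by simpa using this)
  · exact (monic_multiset_prod_of_monic _ _ fun a _ => monic_X_sub_C a).ne_zero
  · rw [mul_comm, ← hPc, hP]; ring

theorem minors_of_relations {k E : Type*} [Field k] [Field E] [Algebra k E] {n : ℕ}
    (x : Fin n → E) (hx : AlgebraicIndependent k x) (τ : E) (hτ : Transcendental k τ)
    (u v : Fin n → k[X]) (hu : ∑ j, aeval τ (u j) * x j = 0)
    (hv : ∑ j, aeval τ (v j) * x j = 0) (a b : Fin n) : u a * v b = u b * v a := by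
  by_contra hne
  have hab : a ≠ b := by rintro rfl; exact hne rfl
  set K := IntermediateField.adjoin k (insert τ (Set.image x {j | j ≠ a ∧ j ≠ b})) with hK
  have hτK : τ ∈ K := IntermediateField.subset_adjoin _ _ (Set.mem_insert _ _)
  have hxK : ∀ j, j ≠ a → j ≠ b → x j ∈ K := fun j h1 h2 =>
    IntermediateField.subset_adjoin _ _ (Set.mem_insert_of_mem _ ⟨j, ⟨h1, h2⟩, rfl⟩)
  have hp : ∀ p : k[X], aeval τ p ∈ K := fun p => by
    have h := Polynomial.aeval_mem_adjoin_singleton k τ (p := p)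
    exact (Algebra.adjoin_le (S := K.toSubalgebra) (by simpa using hτK)) h
  have hne0 : ∀ p : k[X], p ≠ 0 → aeval τ p ≠ 0 := fun p h h0 =>
    h ((transcendental_iff.mp hτ) p h0)
  have key : ∀ (w : Fin n → k[X]) (c : Fin n), (∀ j, j ≠ c → w j ≠ 0 → x j ∈ K) →
      ∑ j, aeval τ (w j) * x j = 0 → w c ≠ 0 → x c ∈ K := by
    intro w c hwj hw hwc
    rw [← Finset.add_sum_erase _ _ (Finset.mem_univ c)] at hw
    have h1 : x c = - (aeval τ (w c))⁻¹ * ∑ j ∈ Finset.univ.erase c, aeval τ (w j) * x j := by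
      rw [eq_neg_of_add_eq_zero_right hw]
      field_simp [hne0 _ hwc]
    rw [h1]
    refine K.mul_mem (K.neg_mem (K.inv_mem (hp _))) (K.sum_mem fun j hj => ?_)
    by_cases h0 : w j = 0
    · simp [h0]
    · exact K.mul_mem (hp _) (hwj j (Finset.ne_of_mem_erase hj) h0)
  have hcomb : ∀ r s : k[X], ∑ j, aeval τ (u j * r - v j * s) * x j = 0 := by
    intro r s
    have : ∀ j, aeval τ (u j * r - v j * s) * x j =
        aeval τ r * (aeval τ (u j) * x j) - aeval τ s * (aeval τ (v j) * x j) := by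
      intro j; simp only [map_sub, map_mul]; ring
    simp only [this, Finset.sum_sub_distrib, ← Finset.mul_sum, hu, hv, mul_zero, sub_zero]
  have hxa : x a ∈ K := by
    refine key (fun j => u j * v b - v j * u b) a (fun j hja hj => hxK j hja ?_) (hcomb _ _) ?_
    · rintro rfl; exact hj (by ring)
    · intro h; exact hne (by linear_combination h)
  have hxb : x b ∈ K := by
    refine key (fun j => u j * v a - v j * u a) b (fun j hjb hj => hxK j ?_ hjb) (hcomb _ _) ?_
    · rintro rfl; exact hj (by ring)
    · intro h; exact hne (by linear_combination -h)
  have hall : ∀ j, x j ∈ K := by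
    intro j
    by_cases h1 : j = a
    · exact h1 ▸ hxa
    by_cases h2 : j = b
    · exact h2 ▸ hxb
    exact hxK j h1 h2
  set S : Set E := insert τ (Set.image x {j | j ≠ a ∧ j ≠ b}) with hS
  have hind : (AlgebraicIndependent.matroid k E).Indep (Set.range x) :=
    AlgebraicIndependent.matroid_indep_iff.mpr hx.to_subtype_range
  have hsub : Set.range x ⊆ (AlgebraicIndependent.matroid k E).closure S := by
    rintro _ ⟨j, rfl⟩
    rw [AlgebraicIndependent.matroid_closure_eq]
    change IsAlgebraic (Algebra.adjoin k S) (x j)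
    rw [← IntermediateField.isAlgebraic_adjoin_iff]
    exact isAlgebraic_algebraMap (⟨x j, hall j⟩ : K)
  have hcard := hind.encard_le_eRk_of_subset hsub
  rw [Matroid.eRk_closure_eq] at hcard
  have h2 := hcard.trans (Matroid.eRk_le_encard _ S)
  have h3 : S.encard ≤ ((n - 2 : ℕ) : ℕ∞) + 1 := by
    refine (Set.encard_insert_le _ _).trans ?_
    gcongr
    refine (Set.encard_image_le _ _).trans ?_
    have : {j : Fin n | j ≠ a ∧ j ≠ b} = ((Finset.univ.erase a).erase b : Finset (Fin n)) := by
      ext j; simp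
    rw [this, Set.encard_coe_eq_coe_finsetCard, Finset.card_erase_of_mem (by simp [hab.symm]),
      Finset.card_erase_of_mem (by simp)]
    simp [Nat.sub_sub]
  have h4 : (Set.range x).encard = (n : ℕ∞) := by
    rw [← Set.image_univ, hx.injective.encard_image, Set.encard_univ]; simp
  rw [h4] at h2
  have h5 := h2.trans h3
  have h6 : n ≤ n - 2 + 1 := by exact_mod_cast h5
  have := a.isLt; have := b.isLt
  have : (a : ℕ) ≠ b := fun h => hab (Fin.ext h)
  omega

theorem additive_comp {k : Type*} [CommRing k] {c : k[X]} (hc : IsAdditivePoly c) (s : k) :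
    c.comp (C s + X) = C (c.eval s) + c := by
  have h := congrArg (Polynomial.map (evalRingHom s)) hc
  have h1 : (coaddSubst c).map (evalRingHom s) = c.comp (C s + X) := by
    rw [coaddSubst, ← coe_mapRingHom, hom_eval₂, comp]
    congr 1
    · ext a; simp
    · simp
  rw [h1] at h
  rw [h, Polynomial.map_add, map_C, map_map]
  congr 1
  convert Polynomial.map_id
  ext a; simp

theorem polar_aux {k : Type*} [Field k] {c1 c2 c3 c4 : k[X]} (h1 : IsAdditivePoly c1)
    (h2 : IsAdditivePoly c2) (h3 : IsAdditivePoly c3) (h4 : IsAdditivePoly c4)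
    (hm : c1 * c4 = c2 * c3) (s : k) (hs : c2.eval s ≠ 0)
    (hne : C (c2.eval s) * c1 - C (c1.eval s) * c2 ≠ 0) :
    c4 = C (c4.eval s / c2.eval s) * c2 := by
  have hp := congrArg (fun p => Polynomial.comp p (C s + X)) hm
  simp only [mul_comp, additive_comp h1, additive_comp h2, additive_comp h3, additive_comp h4] at hp
  have he := congrArg (fun p => C (Polynomial.eval s p)) hm
  simp only [eval_mul, C_mul] at he
  have hz : (C (c2.eval s) * c1 - C (c1.eval s) * c2) *
      (C (c2.eval s) * c4 - C (c4.eval s) * c2) = 0 := by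
    linear_combination (C (c2.eval s)) ^ 2 * hm + c2 ^ 2 * he
      - C (c2.eval s) * c2 * (hp - hm - he)
  have hz' := (mul_eq_zero.mp hz).resolve_left hne
  have hC : C (c2.eval s) ≠ 0 := by simpa using hs
  apply mul_left_cancel₀ hC
  rw [← mul_assoc, ← C_mul, mul_div_cancel₀ _ hs]
  linear_combination hz'

theorem invariants_of_line {k A : Type*} [Field k] [CommRing A] [IsDomain A] [Algebra k A]
    {β : A →ₐ[k] A[X]} (hβ : IsGaCoaction β) (R : Subalgebra k A) (hR : ∀ r ∈ R, β r = C r)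
    (u : A) (hu : β u ≠ C u) (hsurj : ∀ g : A, ∃ p : (R)[X], aeval u p = g)
    (g : A) (hg : β g = C g) : g ∈ R := by
  obtain ⟨p, rfl⟩ := hsurj g
  have hcomp : ∀ p : (R)[X], β (aeval u p) = (p.map (algebraMap R A)).comp (β u) := by
    intro p
    induction p using Polynomial.induction_on' with
    | add p q hp hq => simp only [map_add, hp, hq, Polynomial.map_add, add_comp]
    | monomial m a =>
      rw [aeval_monomial, map_mul, map_pow, map_monomial, monomial_comp]
      rw [show algebraMap R A a = (a : A) from rfl, hR a a.2]
  have hd : (β u).natDegree ≠ 0 := fun h => hu (coact_eq_C hβ u h)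
  have h1 := congrArg natDegree (hcomp p)
  rw [hg, natDegree_C, natDegree_comp,
    natDegree_map_eq_of_injective (Subtype.val_injective)] at h1
  have h2 : p.natDegree = 0 := (mul_eq_zero.mp h1.symm).resolve_right hd
  rw [eq_C_of_natDegree_eq_zero h2, aeval_C]
  exact (p.coeff 0).2

theorem mvX_lin {k : Type*} [Field k] {n : ℕ} (a : Fin n → k)
    (h : ∑ j, MvPolynomial.C (a j) * (MvPolynomial.X j : MvPolynomial (Fin n) k) = 0)
    (j : Fin n) : a j = 0 := by
  classical
  have := congrArg (MvPolynomial.coeff (Finsupp.single j 1)) h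
  simpa [MvPolynomial.coeff_sum, MvPolynomial.coeff_C_mul, MvPolynomial.coeff_X,
    Finsupp.single_left_inj] using this

set_option maxHeartbeats 1000000

/-- Theorem: zero large pedestal ideal forces trivial invariants:
for a linear upper-triangular coaction on `k[x₁,…,xₙ]` whose large pedestal
ideal is zero, the ring of invariants is generated by the invariant linear
forms. -/
theorem stmt9 {k : Type*} [Field k] [IsAlgClosed k] {n : ℕ}
    (β : MvPolynomial (Fin n) k →ₐ[k] Polynomial (MvPolynomial (Fin n) k))
    (hβ : IsGaCoaction β)
    (q : Fin n → Fin n → Polynomial k)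
    (hup : ∀ i : Fin n, β (MvPolynomial.X i) =
      Polynomial.C (MvPolynomial.X i) +
        ∑ j ∈ Finset.Iio i,
          (q i j).map (algebraMap k (MvPolynomial (Fin n) k)) *
            Polynomial.C (MvPolynomial.X j))
    (hped : ∀ (g h : MvPolynomial (Fin n) k) (c : Polynomial k),
      IsAdditivePoly c → c ≠ 0 →
      β h = Polynomial.C h →
      β g = Polynomial.C g +
        c.map (algebraMap k (MvPolynomial (Fin n) k)) * Polynomial.C h →
      h = 0) :
    ∀ f : MvPolynomial (Fin n) k,
      β f = Polynomial.C f ↔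
        f ∈ Algebra.adjoin k {ℓ : MvPolynomial (Fin n) k |
          ℓ ∈ Submodule.span k
            (Set.range (MvPolynomial.X : Fin n → MvPolynomial (Fin n) k)) ∧
          β ℓ = Polynomial.C ℓ} := by
  classical
  set L : Set (MvPolynomial (Fin n) k) := {ℓ : (MvPolynomial (Fin n) k) | ℓ ∈ Submodule.span k (Set.range (MvPolynomial.X : Fin n → (MvPolynomial (Fin n) k))) ∧
          β ℓ = Polynomial.C ℓ} with hL
  have hLinv : ∀ r ∈ Algebra.adjoin k L, β r = C r := by
    intro r hr
    have : Algebra.adjoin k L ≤ AlgHom.equalizer β (CAlgHom : (MvPolynomial (Fin n) k) →ₐ[k] (MvPolynomial (Fin n) k)[X]) :=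
      Algebra.adjoin_le fun x hx => hx.2
    exact this hr
  intro f
  refine ⟨fun hf => ?_, hLinv f⟩
  have hspan : ∀ j, (MvPolynomial.X j : (MvPolynomial (Fin n) k)) ∈
      Submodule.span k (Set.range (MvPolynomial.X : Fin n → (MvPolynomial (Fin n) k))) := fun j =>
    Submodule.subset_span ⟨j, rfl⟩
  -- normalized matrix
  set Q : Fin n → Fin n → k[X] := fun i j => if j < i then q i j else 0 with hQ
  have hQi : ∀ i j, Q i j ≠ 0 → j < i := by
    intro i j h
    by_contra h'
    exact h (if_neg h')
  have hβX : ∀ i, β (MvPolynomial.X i) = C (MvPolynomial.X i) +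
      ∑ j, (Q i j).map (algebraMap k (MvPolynomial (Fin n) k)) * C (MvPolynomial.X j) := by
    intro i
    rw [hup i]
    congr 1
    rw [← Finset.sum_subset (Finset.subset_univ (Finset.Iio i))]
    · refine Finset.sum_congr rfl fun j hj => ?_
      rw [hQ]; simp only [if_pos (Finset.mem_Iio.mp hj)]
    · intro j _ hj
      rw [hQ]; simp only [if_neg (fun h => hj (Finset.mem_Iio.mpr h))]
      simp
  clear_value Q
  by_cases htriv : ∀ i, β (MvPolynomial.X i) = C (MvPolynomial.X i)
  · have : (⊤ : Subalgebra k (MvPolynomial (Fin n) k)) ≤ Algebra.adjoin k L := by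
      rw [← MvPolynomial.adjoin_range_X]
      apply Algebra.adjoin_mono
      rintro _ ⟨i, rfl⟩
      exact ⟨hspan i, htriv i⟩
    exact this Algebra.mem_top
  obtain ⟨i₀, hi₀, hmin⟩ : ∃ i₀, β (MvPolynomial.X i₀) ≠ C (MvPolynomial.X i₀) ∧
      ∀ j < i₀, β (MvPolynomial.X j) = C (MvPolynomial.X j) := by
    push Not at htriv
    obtain ⟨i, hi⟩ := htriv
    induction i using WellFoundedLT.induction with
    | _ i ih =>
      by_cases h : ∀ j < i, β (MvPolynomial.X j) = C (MvPolynomial.X j)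
      · exact ⟨i, hi, h⟩
      · push Not at h
        obtain ⟨j, hj, hj'⟩ := h
        exact ih j hj hj'
  obtain ⟨τ, hτ, hfix⟩ := exists_tau (E := AlgebraicClosure (FractionRing (MvPolynomial (Fin n) k)))
    (by
      rw [IsScalarTower.algebraMap_eq (MvPolynomial (Fin n) k) (FractionRing (MvPolynomial (Fin n) k))]
      exact (algebraMap (FractionRing (MvPolynomial (Fin n) k)) _).injective.comp (IsFractionRing.injective (MvPolynomial (Fin n) k) _))
    hβ ⟨_, hi₀⟩ hped
  have hinj : Function.Injective (algebraMap (MvPolynomial (Fin n) k) (AlgebraicClosure (FractionRing (MvPolynomial (Fin n) k)))) := by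
    rw [IsScalarTower.algebraMap_eq (MvPolynomial (Fin n) k) (FractionRing (MvPolynomial (Fin n) k))]
    exact (algebraMap (FractionRing (MvPolynomial (Fin n) k)) _).injective.comp (IsFractionRing.injective (MvPolynomial (Fin n) k) _)
  set x : Fin n → AlgebraicClosure (FractionRing (MvPolynomial (Fin n) k)) := fun j =>
    algebraMap (MvPolynomial (Fin n) k) _ (MvPolynomial.X j) with hx
  have hxind : AlgebraicIndependent k x :=
    (MvPolynomial.algebraicIndependent_X (Fin n) k).map'
      (f := IsScalarTower.toAlgHom k (MvPolynomial (Fin n) k) (AlgebraicClosure (FractionRing (MvPolynomial (Fin n) k)))) hinj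
  have hrel : ∀ i, ∑ j, aeval τ (Q i j) * x j = 0 := by
    intro i
    have := hfix (MvPolynomial.X i)
    rw [hβX i, map_add, aeval_C, add_eq_left, map_sum] at this
    simpa only [map_mul, aeval_map_algebraMap, aeval_C] using this
  have hminor : ∀ i i' a b, Q i a * Q i' b = Q i b * Q i' a := fun i i' a b =>
    minors_of_relations x hxind τ hτ (Q i) (Q i') (hrel i) (hrel i') a b
  obtain ⟨b, hb⟩ : ∃ b, Q i₀ b ≠ 0 := by
    by_contra! h
    apply hi₀
    rw [hβX]; simp [h]
  have hQinv : ∀ i j, Q i j ≠ 0 → β (MvPolynomial.X j) = C (MvPolynomial.X j) := by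
    intro i j h
    apply hmin
    apply hQi
    intro h0
    have := hminor i i₀ j b
    rw [h0, mul_zero] at this
    exact (mul_ne_zero h hb) this
  -- coefficients of the coaction
  have hcoeff : ∀ i m, 0 < m → (β (MvPolynomial.X i)).coeff m =
      ∑ j, MvPolynomial.C ((Q i j).coeff m) * (MvPolynomial.X j : (MvPolynomial (Fin n) k)) := by
    intro i m hm
    rw [hβX, coeff_add, coeff_C, if_neg hm.ne', zero_add, finsetSum_coeff]
    simp only [coeff_mul_C, coeff_map, MvPolynomial.algebraMap_eq]
  have hCC : ∀ a : k, β (MvPolynomial.C a) = C (MvPolynomial.C a) := fun a => β.commutes a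
  have hadd : ∀ i j, IsAdditivePoly (Q i j) := by
    intro i j
    apply isAdditivePoly_of_coeff
    · refine mvX_lin (fun j => (Q i j).coeff 0) ?_ j
      have h1 := coact_coeff_zero hβ (MvPolynomial.X i : (MvPolynomial (Fin n) k))
      rw [hβX, coeff_add, coeff_C_zero, add_eq_left, finsetSum_coeff] at h1
      simp only [coeff_mul_C, coeff_map] at h1
      exact h1
    · intro m l hm hl
      refine mvX_lin (fun j => ((m + l).choose m : k) * (Q i j).coeff (m + l)) ?_ j
      have h1 := coact_coeff hβ (MvPolynomial.X i : (MvPolynomial (Fin n) k)) m l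
      have h2 : β ((β (MvPolynomial.X i)).coeff m) = C ((β (MvPolynomial.X i)).coeff m) := by
        rw [hcoeff i m hm, map_sum, map_sum]
        refine Finset.sum_congr rfl fun j _ => ?_
        by_cases h0 : Q i j = 0
        · simp [h0]
        · rw [map_mul, map_mul, hCC, hQinv i j h0]
      rw [h2, coeff_C, if_neg hl.ne', hcoeff i _ (by omega), Finset.mul_sum] at h1
      rw [h1]
      refine Finset.sum_congr rfl fun j _ => ?_
      simp [mul_assoc]
  obtain ⟨s, hs⟩ : ∃ s, (Q i₀ b).eval s ≠ 0 := by
    by_contra! h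
    have : Infinite k := IsAlgClosed.instInfinite
    exact hb (Polynomial.funext fun r => by simpa using h r)
  obtain ⟨a, ha⟩ : ∃ a, C ((Q i₀ b).eval s) * Q i₀ a - C ((Q i₀ a).eval s) * Q i₀ b ≠ 0 := by
    by_contra! h
    set μ : Fin n → k := fun a => (Q i₀ a).eval s / (Q i₀ b).eval s with hμ
    have hQμ : ∀ a, Q i₀ a = Q i₀ b * C (μ a) := by
      intro a
      have hC : C ((Q i₀ b).eval s) ≠ 0 := by simpa using hs
      apply mul_left_cancel₀ hC
      rw [mul_left_comm, ← C_mul, hμ]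
      simp only [mul_div_cancel₀ _ hs]
      linear_combination h a
    have hz : ∑ a, MvPolynomial.C (μ a) * (MvPolynomial.X a : (MvPolynomial (Fin n) k)) = 0 := by
      refine hped (MvPolynomial.X i₀) _ (Q i₀ b) (hadd _ _) hb ?_ ?_
      · rw [map_sum, map_sum]
        refine Finset.sum_congr rfl fun j _ => ?_
        by_cases h0 : Q i₀ j = 0
        · simp [hμ, h0]
        · rw [map_mul, map_mul, hCC, hQinv i₀ j h0]
      · rw [hβX i₀, map_sum, Finset.mul_sum]
        refine congrArg (fun z => C (MvPolynomial.X i₀) + z) (Finset.sum_congr rfl fun j _ => ?_)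
        rw [hQμ j, Polynomial.map_mul, map_C, mul_assoc, ← C_mul, MvPolynomial.algebraMap_eq]
    have := mvX_lin μ hz b
    rw [hμ] at this
    simp only [div_self hs] at this
    exact one_ne_zero this
  set lam : Fin n → k := fun i => (Q i b).eval s / (Q i₀ b).eval s with hlam
  have hQb : ∀ i, Q i b = C (lam i) * Q i₀ b := fun i =>
    polar_aux (hadd i₀ a) (hadd i₀ b) (hadd i a) (hadd i b) (hminor i₀ i a b) s hs ha
  have hQl : ∀ i j, Q i j = C (lam i) * Q i₀ j := by
    intro i j
    apply mul_right_cancel₀ hb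
    rw [hminor i i₀ j b, hQb i]; ring
  have hy : ∀ i, (MvPolynomial.X i - MvPolynomial.C (lam i) * MvPolynomial.X i₀ : (MvPolynomial (Fin n) k)) ∈ L := by
    intro i
    refine ⟨?_, ?_⟩
    · refine Submodule.sub_mem _ (hspan i) ?_
      rw [MvPolynomial.C_mul']
      exact Submodule.smul_mem _ _ (hspan i₀)
    · rw [map_sub, map_mul, hCC, hβX i, hβX i₀, map_sub, map_mul, mul_add, Finset.mul_sum]
      have : ∀ j, (Q i j).map (algebraMap k (MvPolynomial (Fin n) k)) * C (MvPolynomial.X j) =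
          C (MvPolynomial.C (lam i)) * ((Q i₀ j).map (algebraMap k (MvPolynomial (Fin n) k)) * C (MvPolynomial.X j)) := by
        intro j
        rw [hQl i j, Polynomial.map_mul, map_C, MvPolynomial.algebraMap_eq]; ring
      simp only [this]; ring
  refine invariants_of_line hβ (Algebra.adjoin k L) hLinv (MvPolynomial.X i₀) hi₀ ?_ f hf
  intro g
  induction g using MvPolynomial.induction_on with
  | C a => exact ⟨C (algebraMap k _ a), by rw [aeval_C]; rfl⟩
  | add p q hp hq =>
    obtain ⟨p', rfl⟩ := hp
    obtain ⟨q', rfl⟩ := hq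
    exact ⟨p' + q', map_add _ _ _⟩
  | mul_X p i hp =>
    obtain ⟨p', rfl⟩ := hp
    refine ⟨p' * (C ⟨_, Algebra.subset_adjoin (hy i)⟩ + C (algebraMap k _ (lam i)) * X), ?_⟩
    rw [map_mul, map_add, map_mul, aeval_C, aeval_C, aeval_X]
    congr 1
    change (MvPolynomial.X i - MvPolynomial.C (lam i) * MvPolynomial.X i₀ : (MvPolynomial (Fin n) k)) +
      MvPolynomial.C (lam i) * MvPolynomial.X i₀ = _
    ring
end

section
/- Let k be an algebraically closed field, A a finitely generated integral domain over k with a 𝔾ₐ-coaction β, and let (g,h) be a principle pair with h ≠ 0, i.e. h ∈ A^{𝔾ₐ} and β(g) = g + t·h. For a ∈ A let π(a) ∈ A_h denote the result of mapping the coefficients of β(a) into the localization A_h and evaluating the variable t at −g/h. Then π(a) is invariant for every a ∈ A: β_h(π(a)) is the constant polynomial π(a). -/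
open Polynomial

/-- Dixmier-type map: if `(g,h)` is a principle pair
(`β(g) = g + t·h`, `h ≠ 0` invariant) and `π(a)` is obtained by pushing the
coefficients of `β(a)` into the localization `A_h = S` and evaluating `t` at
`−g/h`, then `π(a)` is invariant for the extended coaction `β_h`. -/
theorem stmt11 {k : Type*} [Field k] [IsAlgClosed k]
    {A : Type*} [CommRing A] [IsDomain A] [Algebra k A]
    (hfg : Algebra.FiniteType k A)
    (β : A →ₐ[k] Polynomial A) (hβ : IsGaCoaction β)
    (g h : A) (hh0 : h ≠ 0)
    (hinv : β h = Polynomial.C h)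
    (hpair : β g = Polynomial.C g + Polynomial.X * Polynomial.C h)
    (S : Type*) [CommRing S] [Algebra A S] [Algebra k S] [IsScalarTower k A S]
    [IsLocalization.Away h S]
    (βS : S →ₐ[k] Polynomial S) (hβS : IsGaCoaction βS)
    (hext : ∀ a : A, βS (algebraMap A S a) = (β a).map (algebraMap A S)) :
    ∀ a : A,
      βS ((β a).eval₂ (algebraMap A S)
          (-(IsLocalization.mk' S g ⟨h, Submonoid.mem_powers h⟩))) =
        Polynomial.C ((β a).eval₂ (algebraMap A S)
          (-(IsLocalization.mk' S g ⟨h, Submonoid.mem_powers h⟩))) := by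
  intro a
  set x : S := -(IsLocalization.mk' S g ⟨h, Submonoid.mem_powers h⟩) with hx
  have hu : IsUnit (algebraMap A S h) := IsLocalization.Away.algebraMap_isUnit h
  have hxh : x * algebraMap A S h = -(algebraMap A S g) := by
    rw [hx, neg_mul]
    congr 1
    exact IsLocalization.mk'_spec S g ⟨h, Submonoid.mem_powers h⟩
  clear_value x
  have hβx : βS x = C x - X := by
    have h1 := congrArg βS hxh
    rw [map_mul, map_neg, hext, hext, hinv, hpair] at h1
    simp only [Polynomial.map_add, Polynomial.map_mul, Polynomial.map_C, Polynomial.map_X] at h1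
    have hu2 : IsUnit (C (algebraMap A S h)) := hu.map C
    apply hu2.mul_right_cancel
    rw [h1, sub_mul, ← C_mul, hxh, C_neg]
    ring
  have key : eval₂ (mapRingHom (algebraMap A S)) (C x - X) ((β a).map β.toRingHom)
      = C ((β a).eval₂ (algebraMap A S) x) := by
    rw [← hβ.2 a, coaddSubst, ← coe_eval₂RingHom, hom_eval₂, hom_eval₂]
    congr 1
    · ext r : 1
      simp
    · simp
  rw [← key, eval₂_map, ← hβx]
  have h2 := hom_eval₂ (β a) (algebraMap A S) βS.toRingHom x
  refine h2.trans ?_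
  have h3 : βS.toRingHom.comp (algebraMap A S)
      = (mapRingHom (algebraMap A S)).comp β.toRingHom := by
    ext r : 1
    exact hext r
  rw [h3]
  rfl
end

section
/- Let k be an algebraically closed field, A a finitely generated integral domain over k with a 𝔾ₐ-coaction β, generated as a k-algebra by z₁,…,zₙ, and let (g,h) be a principle pair with h ≠ 0. Set f_i := π(z_i) ∈ A_h, where π(a) is obtained by mapping the coefficients of β(a) into A_h and evaluating t at −g/h. Then the ring of invariants (A_h)^{𝔾ₐ} equals the k-subalgebra of A_h generated by f₁,…,fₙ together with h^{−1}. Moreover, for every polynomial R ∈ k[Z₁,…,Zₙ] such that R(z₁,…,zₙ) is invariant, one has R(z₁,…,zₙ) = R(f₁,…,fₙ) in A_h. -/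
open Polynomial

/-- van den Essen-type computation of invariants: if
`z₁,…,zₙ` generate `A`, `(g,h)` is a principle pair with `h ≠ 0`, and
`f_i := π(z_i)` (coefficients of `β(z_i)` pushed to `A_h = S`, `t ↦ −g/h`),
then `(A_h)^{𝔾ₐ}` is generated as a `k`-algebra by `f₁,…,fₙ` and `h⁻¹`, and any
invariant `R(z₁,…,zₙ)` equals `R(f₁,…,fₙ)` in `A_h`. -/
theorem stmt12 {k : Type*} [Field k] [IsAlgClosed k]
    {A : Type*} [CommRing A] [IsDomain A] [Algebra k A]
    (hfg : Algebra.FiniteType k A)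
    (β : A →ₐ[k] Polynomial A) (hβ : IsGaCoaction β)
    {n : ℕ} (z : Fin n → A)
    (hz : Algebra.adjoin k (Set.range z) = ⊤)
    (g h : A) (hh0 : h ≠ 0)
    (hinv : β h = Polynomial.C h)
    (hpair : β g = Polynomial.C g + Polynomial.X * Polynomial.C h)
    (S : Type*) [CommRing S] [Algebra A S] [Algebra k S] [IsScalarTower k A S]
    [IsLocalization.Away h S]
    (βS : S →ₐ[k] Polynomial S) (hβS : IsGaCoaction βS)
    (hext : ∀ a : A, βS (algebraMap A S a) = (β a).map (algebraMap A S)) :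
    (∀ x : S, βS x = Polynomial.C x ↔
      x ∈ Algebra.adjoin k
        (Set.range (fun i : Fin n => (β (z i)).eval₂ (algebraMap A S)
            (-(IsLocalization.mk' S g ⟨h, Submonoid.mem_powers h⟩))) ∪
          {IsLocalization.mk' S (1 : A) ⟨h, Submonoid.mem_powers h⟩})) ∧
    (∀ R : MvPolynomial (Fin n) k,
      β (MvPolynomial.aeval z R) = Polynomial.C (MvPolynomial.aeval z R) →
      algebraMap A S (MvPolynomial.aeval z R) =
        MvPolynomial.aeval (fun i : Fin n => (β (z i)).eval₂ (algebraMap A S)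
          (-(IsLocalization.mk' S g ⟨h, Submonoid.mem_powers h⟩))) R) := by
  set s : S := IsLocalization.mk' S g ⟨h, Submonoid.mem_powers h⟩ with hs
  set u : S := IsLocalization.mk' S (1 : A) ⟨h, Submonoid.mem_powers h⟩ with hu
  have huh : u * algebraMap A S h = 1 := by
    have := IsLocalization.mk'_spec S (1 : A) (⟨h, Submonoid.mem_powers h⟩ : Submonoid.powers h)
    rw [map_one] at this
    exact this
  have hsu : s = algebraMap A S g * u := by
    rw [hs, hu]
    exact IsLocalization.mk'_eq_mul_mk'_one g _
  have hCu : Polynomial.C u * Polynomial.C (algebraMap A S h) = 1 := by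
    rw [← Polynomial.C_mul, huh, Polynomial.C_1]
  have hβh : βS (algebraMap A S h) = Polynomial.C (algebraMap A S h) := by
    rw [hext, hinv, Polynomial.map_C]
  have hβu : βS u = Polynomial.C u := by
    have h1 : βS u * Polynomial.C (algebraMap A S h) = 1 := by
      rw [← hβh, ← map_mul, huh, map_one]
    calc βS u = βS u * (Polynomial.C u * Polynomial.C (algebraMap A S h)) := by
          rw [hCu, mul_one]
      _ = (βS u * Polynomial.C (algebraMap A S h)) * Polynomial.C u := by ring
      _ = Polynomial.C u := by rw [h1, one_mul]
  have hβs : βS s = Polynomial.C s + Polynomial.X := by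
    rw [hsu, map_mul, hβu, hext, hpair]
    simp only [Polynomial.map_add, Polynomial.map_mul, Polynomial.map_C, Polynomial.map_X,
      Polynomial.C_mul]
    linear_combination Polynomial.X * hCu
  let π : S →ₐ[k] S := ((Polynomial.aeval (-s) : Polynomial S →ₐ[S] S).restrictScalars k).comp βS
  have hπ : ∀ x, π x = (βS x).eval (-s) := fun x => by
    simp [π]
  have hπA : ∀ a, π (algebraMap A S a) = (β a).eval₂ (algebraMap A S) (-s) := fun a => by
    rw [hπ, hext, Polynomial.eval_map]
  have hfix : ∀ x, βS x = Polynomial.C x → π x = x := fun x hx => by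
    rw [hπ, hx, Polynomial.eval_C]
  have hπinv : ∀ x, βS (π x) = Polynomial.C (π x) := fun x => by
    have h2 : βS (π x) = ((βS x).map βS.toRingHom).eval (βS (-s)) := by
      rw [hπ, Polynomial.eval_map]
      exact Polynomial.hom_eval₂ (βS x) (RingHom.id S) βS.toRingHom (-s)
    rw [h2, ← hβS.2 x, coaddSubst, ← Polynomial.coe_evalRingHom, Polynomial.hom_eval₂]
    have h3 : (Polynomial.evalRingHom (βS (-s))).comp
        ((Polynomial.C : Polynomial S →+* Polynomial (Polynomial S)).comp
          (Polynomial.C : S →+* Polynomial S)) = Polynomial.C := by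
      ext1 y
      simp
    have h4 : Polynomial.evalRingHom (βS (-s)) (Polynomial.C Polynomial.X + Polynomial.X)
        = Polynomial.C (-s) := by
      rw [map_neg, hβs]
      simp
    rw [h3, h4, hπ, Polynomial.eval, Polynomial.hom_eval₂, RingHom.comp_id]
  have hπR : ∀ R : MvPolynomial (Fin n) k, π (algebraMap A S (MvPolynomial.aeval z R)) =
      MvPolynomial.aeval (fun i : Fin n => (β (z i)).eval₂ (algebraMap A S) (-s)) R := fun R => by
    have h5 : ((π.comp (IsScalarTower.toAlgHom k A S)).comp (MvPolynomial.aeval z)) =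
        MvPolynomial.aeval (fun i : Fin n => (β (z i)).eval₂ (algebraMap A S) (-s)) := by
      apply MvPolynomial.algHom_ext
      intro i
      simp [hπA]
    exact DFunLike.congr_fun h5 R
  refine ⟨fun x => ⟨fun hx => ?_, fun hx => ?_⟩, fun R hR => ?_⟩
  · obtain ⟨⟨a, m⟩, hm⟩ := IsLocalization.surj (Submonoid.powers h) x
    obtain ⟨m, j, rfl⟩ := m
    simp only [map_pow] at hm
    have hxe : x = algebraMap A S a * u ^ j := by
      rw [← hm, mul_assoc, ← mul_pow, mul_comm _ u, huh, one_pow, mul_one]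
    have ha : a ∈ Algebra.adjoin k (Set.range z) := hz ▸ Algebra.mem_top
    rw [Algebra.adjoin_range_eq_range_aeval] at ha
    obtain ⟨R, rfl⟩ := ha
    rw [← hfix x hx, hxe, map_mul, map_pow, hfix u hβu]
    refine mul_mem ?_ (pow_mem ?_ j)
    swap
    · exact Algebra.subset_adjoin (Set.mem_union_right _ rfl)
    refine Algebra.adjoin_mono Set.subset_union_left ?_
    rw [Algebra.adjoin_range_eq_range_aeval]
    exact ⟨R, (hπR R).symm⟩
  · induction hx using Algebra.adjoin_induction with
    | mem x hx =>
      rcases hx with ⟨i, rfl⟩ | rfl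
      · simp only [← hπA]
        exact hπinv _
      · exact hβu
    | algebraMap r => rw [AlgHom.commutes]; rfl
    | add x y _ _ hx hy => rw [map_add, hx, hy, Polynomial.C_add]
    | mul x y _ _ hx hy => rw [map_mul, hx, hy, Polynomial.C_mul]
  · rw [← hπR, hfix]
    rw [hext, hR, Polynomial.map_C]
end

section
/- Let k be an algebraically closed field, A a finitely generated integral domain over k with a 𝔾ₐ-coaction β, and h ∈ A^{𝔾ₐ} nonzero. The following are equivalent: (a) there exists a k-algebra isomorphism φ from the polynomial ring (A_h)^{𝔾ₐ}[T] onto A_h that restricts to the inclusion on (A_h)^{𝔾ₐ} and satisfies β_h(φ(T)) = φ(T) + t in A_h[t] (i.e. the open subvariety D(h) of Spec A is a trivial 𝔾ₐ-bundle over D(h)//𝔾ₐ); (b) there exist g ∈ A and e ∈ ℕ such that β(g) = g + t·h^e, i.e. (g, h^e) is a principle pair. -/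
open Polynomial

theorem eval_eval_coaddSubst {R : Type*} [CommRing R] (p : Polynomial R) (q : Polynomial R) :
    (coaddSubst p).eval q = p.comp (X + q) := by
  unfold coaddSubst
  rw [← coe_evalRingHom, hom_eval₂]
  simp only [comp, coe_evalRingHom, eval_add, eval_C, eval_X]
  congr 1
  ext x
  simp

theorem slice_proj_invariant {k S : Type*} [CommRing k] [CommRing S] [Algebra k S]
    (βS : S →ₐ[k] Polynomial S) (hβS : IsGaCoaction βS) (s : S)
    (hs : βS s = C s + X) (a : S) :
    βS ((βS a).eval (-s)) = C ((βS a).eval (-s)) := by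
  have h1 : βS ((βS a).eval (-s)) = ((βS a).map βS.toRingHom).eval (βS (-s)) := by
    rw [eval_map]
    exact hom_eval₂ (βS a) (RingHom.id S) βS.toRingHom (-s)
  rw [h1, ← hβS.2 a, eval_eval_coaddSubst, map_neg, hs]
  have : (X + -(C s + X) : Polynomial S) = C (-s) := by
    rw [map_neg]; ring
  rw [this, comp_C]

theorem slice_expand {k S : Type*} [CommRing k] [CommRing S] [Algebra k S]
    (βS : S →ₐ[k] Polynomial S) (hβS : IsGaCoaction βS) (s : S) (a : S) :
    (((βS a).map ((evalRingHom (-s)).comp βS.toRingHom))).eval s = a := by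
  rw [← map_map]
  have h1 : ((((βS a).map βS.toRingHom)).map (evalRingHom (-s))).eval s
      = (((βS a).map βS.toRingHom).eval (C s)).eval (-s) := by
    rw [eval_map, ← coe_evalRingHom (-s), ← eval₂_id, hom_eval₂]
    simp
  rw [h1, ← hβS.2 a, eval_eval_coaddSubst, eval_comp]
  simp [hβS.1 a]

/-- local triviality criterion: `D(h)` is a trivial
`𝔾ₐ`-bundle over `D(h)//𝔾ₐ` — i.e. there is a `k`-algebra isomorphism
`(A_h)^{𝔾ₐ}[T] ≃ A_h` restricting to the inclusion of the invariants and with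
`β_h(φ(T)) = φ(T) + t` — iff there is a principle pair `(g, h^e)`. -/
theorem stmt13 {k : Type*} [Field k] [IsAlgClosed k]
    {A : Type*} [CommRing A] [IsDomain A] [Algebra k A]
    (hfg : Algebra.FiniteType k A)
    (β : A →ₐ[k] Polynomial A) (hβ : IsGaCoaction β)
    (h : A) (hh0 : h ≠ 0) (hinv : β h = Polynomial.C h)
    (S : Type*) [CommRing S] [Algebra A S] [Algebra k S] [IsScalarTower k A S]
    [IsLocalization.Away h S]
    (βS : S →ₐ[k] Polynomial S) (hβS : IsGaCoaction βS)
    (hext : ∀ a : A, βS (algebraMap A S a) = (β a).map (algebraMap A S)) :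
    (∃ φ : Polynomial ↥(AlgHom.equalizer βS (Polynomial.CAlgHom (R := k) (A := S)))
        ≃ₐ[k] S,
      (∀ x : ↥(AlgHom.equalizer βS (Polynomial.CAlgHom (R := k) (A := S))),
        φ (Polynomial.C x) = (x : S)) ∧
      βS (φ Polynomial.X) = Polynomial.C (φ Polynomial.X) + Polynomial.X) ↔
    (∃ (g : A) (e : ℕ),
      β g = Polynomial.C g + Polynomial.X * Polynomial.C (h ^ e)) := by
  have hhu : IsUnit (algebraMap A S h) := IsLocalization.Away.algebraMap_isUnit h
  have hinj : Function.Injective (algebraMap A S) :=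
    IsLocalization.injective S (M := Submonoid.powers h)
      (powers_le_nonZeroDivisors_of_noZeroDivisors hh0)
  have hSh : βS (algebraMap A S h) = C (algebraMap A S h) := by
    rw [hext, hinv, map_C]
  constructor
  · rintro ⟨φ, -, hφ⟩
    obtain ⟨e, g, hg⟩ := IsLocalization.Away.surj h (φ X)
    refine ⟨g, e, map_injective _ hinj ?_⟩
    rw [← hext, ← hg, map_mul, map_pow, hφ, hSh]
    simp only [Polynomial.map_add, Polynomial.map_mul, map_C, map_X, ← hg, map_mul, map_pow, Polynomial.map_pow]
    ring
  · rintro ⟨g, e, hg⟩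
    obtain ⟨u, hu⟩ := hhu.pow e
    obtain ⟨s, hsu⟩ : ∃ s : S, s * u = algebraMap A S g :=
      ⟨algebraMap A S g * ((u⁻¹ : Sˣ) : S), by simp⟩
    have hs : βS s = C s + X := by
      have hCu : IsUnit (C (u : S)) := u.isUnit.map C
      apply hCu.mul_right_cancel
      have h1 : βS (u : S) = C (u : S) := by rw [hu, map_pow, hSh, map_pow]
      have h2 : βS s * C (u : S) = βS (s * u) := by rw [map_mul βS s, h1]
      rw [h2, hsu, hext, hg, Polynomial.map_add, Polynomial.map_mul, map_C, map_C, map_X, ← hsu,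
        map_pow, ← hu, map_mul, add_mul]
    let I := AlgHom.equalizer βS (Polynomial.CAlgHom (R := k) (A := S))
    let f : Polynomial I →ₐ[k] S := (aeval (R := I) s).restrictScalars k
    have hf : ∀ p : Polynomial I, f p = (p.map I.val.toRingHom).eval s := by
      intro p
      rw [eval_map]
      rfl
    have finj : Function.Injective f := by
      rw [injective_iff_map_eq_zero]
      intro p hp
      have h1 : βS (f p) = (p.map I.val.toRingHom).comp (X + C s) := by
        rw [hf, comp, eval_map, eval₂_map]
        refine (hom_eval₂ p I.val.toRingHom βS.toRingHom s).trans ?_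
        have h2 : βS.toRingHom s = X + C s := by rw [add_comm]; exact hs
        rw [h2]
        congr 1
        ext1 x
        exact x.2
      rw [hp, map_zero] at h1
      have h3 : taylor s (p.map I.val.toRingHom) = 0 := h1.symm
      have h4 : p.map I.val.toRingHom = 0 := taylor_injective s (by rw [h3, map_zero])
      exact map_injective I.val.toRingHom Subtype.val_injective (by rw [h4, Polynomial.map_zero])
    have fsurj : Function.Surjective f := by
      intro a
      let ρ : S →+* I := RingHom.codRestrict ((evalRingHom (-s)).comp βS.toRingHom) I
        (fun b => slice_proj_invariant βS hβS s hs b)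
      refine ⟨(βS a).map ρ, ?_⟩
      rw [hf, map_map]
      exact slice_expand βS hβS s a
    refine ⟨AlgEquiv.ofBijective f ⟨finj, fsurj⟩, ?_, ?_⟩
    · intro x
      change f (C x) = x
      rw [hf]; simp
    · have : f X = s := by rw [hf]; simp
      change βS (f X) = C (f X) + X
      rw [this, hs]
end

section
/- Let k be an algebraically closed field, A a finitely generated integral domain over k with a 𝔾ₐ-coaction β, b(t) a nonzero additive polynomial, and h ∈ A^{𝔾ₐ} nonzero. Suppose that β(f) − f lies in the ideal of A[t] generated by b(t) for every f ∈ A, and that there exist g ∈ A and e ∈ ℕ with β(g) = g + b(t)·h^e (a quasi-principle b(t)-pair (g, h^e)). Then there exists a k-algebra isomorphism φ from the polynomial ring (A_h)^{𝔾ₐ}[T] onto A_h that restricts to the inclusion on (A_h)^{𝔾ₐ} and satisfies β_h(φ(T)) = φ(T) + b(t) in A_h[t]. -/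
open Polynomial

theorem coadd_eq_comp {R : Type*} [CommRing R] (p : Polynomial R) :
    coaddSubst p = (p.map (Polynomial.C : R →+* Polynomial R)).comp (X + C X) := by
  unfold coaddSubst Polynomial.comp
  rw [Polynomial.eval₂_map, add_comm]

theorem coadd_mul {R : Type*} [CommRing R] (p q : Polynomial R) :
    coaddSubst (p * q) = coaddSubst p * coaddSubst q := by
  simp [coadd_eq_comp]

theorem coadd_add {R : Type*} [CommRing R] (p q : Polynomial R) :
    coaddSubst (p + q) = coaddSubst p + coaddSubst q := by
  simp [coadd_eq_comp]

theorem coadd_C {R : Type*} [CommRing R] (r : R) :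
    coaddSubst (C r) = C (C r) := by
  simp [coadd_eq_comp]

theorem coadd_map {R T : Type*} [CommRing R] [CommRing T] (i : R →+* T) (p : Polynomial R) :
    coaddSubst (p.map i) = (coaddSubst p).map (Polynomial.mapRingHom i) := by
  simp only [coadd_eq_comp, Polynomial.map_comp, Polynomial.map_map]
  congr 1
  · congr 1
    ext x
    simp
  · simp

theorem dvd_cancel {R : Type*} [CommRing R] [IsDomain R] (M Y : Polynomial R) (hM : M.Monic)
    (r : R) (hr : r ≠ 0) (hd : M ∣ C r * Y) : M ∣ Y := by
  rw [← Polynomial.modByMonic_eq_zero_iff_dvd hM] at hd ⊢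
  rw [← Polynomial.smul_eq_C_mul, Polynomial.smul_modByMonic] at hd
  exact (smul_eq_zero.mp hd).resolve_left hr

theorem deg_dvd {S : Type*} [CommRing S] [IsDomain S] (M : Polynomial S) (hM : M.Monic)
    (hpos : 0 < M.natDegree)
    (hadd : coaddSubst M = C M + M.map (C : S →+* Polynomial S)) (n : ℕ) :
    ∀ P : Polynomial S, P.natDegree ≤ n →
      M.map (C : S →+* Polynomial S) ∣ coaddSubst P - C P → M.natDegree ∣ P.natDegree := by
  induction n with
  | zero => intro P hP _; simp [Nat.le_zero.mp hP]
  | succ n ih =>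
    intro P hP hd
    have h1 : M ∣ P - C (P.eval 0) := by
      have := _root_.map_dvd (Polynomial.mapRingHom (Polynomial.evalRingHom (0 : S))) hd
      have e1 : (Polynomial.evalRingHom (0:S)).comp (C : S →+* Polynomial S) = RingHom.id S := by
        ext; simp
      simpa [coadd_eq_comp, Polynomial.map_comp, Polynomial.map_map, e1] using this
    obtain ⟨q, hq⟩ := h1
    have hPq : P = C (P.eval 0) + M * q := by rw [← hq]; ring
    generalize P.eval 0 = c at hPq
    by_cases hq0 : q = 0
    · subst hq0; simp [hPq]
    have hdeg : P.natDegree = M.natDegree + q.natDegree := by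
      rw [hPq, add_comm, Polynomial.natDegree_add_C, hM.natDegree_mul' hq0]
    have h2 : M.map (C : S →+* Polynomial S) ∣ C M * (coaddSubst q - C q) := by
      have e2 : coaddSubst P - C P = C M * (coaddSubst q - C q)
          + M.map (C : S →+* Polynomial S) * coaddSubst q := by
        rw [hPq, coadd_add, coadd_mul, hadd, coadd_C]
        simp only [C_add, C_mul]
        ring
      rw [e2] at hd
      exact (dvd_add_left (dvd_mul_right _ _)).mp hd
    have h3 := dvd_cancel _ _ (hM.map _) M hM.ne_zero h2
    rw [hdeg]
    exact dvd_add dvd_rfl (ih q (by omega) h3)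

theorem lc_inv {k S : Type*} [Field k] [CommRing S] [IsDomain S] [Algebra k S]
    (β : S →ₐ[k] Polynomial S) (hβ : IsGaCoaction β) (f : S) :
    β (β f).leadingCoeff = C (β f).leadingCoeff := by
  have h1 := hβ.2 f
  have h2 := congrArg (fun p => p.coeff (β f).natDegree) h1
  simp only [Polynomial.coeff_map] at h2
  have h3 : (coaddSubst (β f)).coeff (β f).natDegree = C (β f).leadingCoeff := by
    have hd : (coaddSubst (β f)).natDegree = (β f).natDegree := by
      rw [coadd_eq_comp, Polynomial.natDegree_comp, Polynomial.natDegree_X_add_C, mul_one,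
        Polynomial.natDegree_map_eq_of_injective Polynomial.C_injective]
    rw [← hd, Polynomial.coeff_natDegree, coadd_eq_comp,
      Polynomial.leadingCoeff_comp (by simp),
      Polynomial.leadingCoeff_map_of_injective Polynomial.C_injective]
    simp
  rw [h3] at h2
  exact h2.symm

theorem gen_all {k S : Type*} [Field k] [CommRing S] [IsDomain S] [Algebra k S]
    (β : S →ₐ[k] Polynomial S) (hβ : IsGaCoaction β) (M : Polynomial S) (hM : M.Monic)
    (hpos : 0 < M.natDegree) (s : S) (hs : β s = C s + M)
    (hdvd : ∀ f, M.natDegree ∣ (β f).natDegree)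
    (T : Subalgebra k S) (hT : ∀ x, β x = C x → x ∈ T) (hsT : s ∈ T) (n : ℕ) :
    ∀ f, (β f).natDegree ≤ n → f ∈ T := by
  have hcomp : ∀ f, (β f).natDegree = 0 → f ∈ T := by
    intro f hf
    apply hT
    have := Polynomial.eq_C_of_natDegree_eq_zero hf
    rw [this, Polynomial.coeff_zero_eq_eval_zero, hβ.1]
  induction n with
  | zero => intro f hf; exact hcomp f (by omega)
  | succ n ih =>
    intro f hf
    by_cases h0 : (β f).natDegree = 0
    · exact hcomp f h0
    obtain ⟨j, hj⟩ := hdvd f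
    have ha := lc_inv β hβ f
    set a := (β f).leadingCoeff with hadef
    have ha0 : a ≠ 0 := by
      rw [hadef, Ne, Polynomial.leadingCoeff_eq_zero]
      intro hz; simp [hz] at h0
    have hQ : (C s + M).Monic := by
      rw [add_comm]
      apply hM.add_of_left
      exact lt_of_le_of_lt Polynomial.degree_C_le (Polynomial.natDegree_pos_iff_degree_pos.mp hpos)
    have hQd : (C s + M).natDegree = M.natDegree := by
      rw [Polynomial.natDegree_C_add]
    have hβ' : β (a * s ^ j) = C a * (C s + M) ^ j := by
      rw [map_mul, map_pow, hs, ha]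
    have hnd : (β (a * s ^ j)).natDegree = (β f).natDegree := by
      rw [hβ', Polynomial.natDegree_C_mul ha0, (hQ.natDegree_pow j), hQd, hj, mul_comm]
    have hlc : (β (a * s ^ j)).leadingCoeff = a := by
      rw [hβ', Polynomial.leadingCoeff_mul, (hQ.pow j).leadingCoeff]; simp
    have hf0 : β f ≠ 0 := fun hz => by simp [hz] at h0
    have hg0 : β (a * s ^ j) ≠ 0 := fun hz => by simp [hz] at hlc; exact ha0 hlc.symm
    have hlt : (β (f - a * s ^ j)).natDegree ≤ n := by
      rw [map_sub]
      have := Polynomial.degree_sub_lt_left (p := β f) (q := β (a * s ^ j))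
        (by rw [Polynomial.degree_eq_natDegree hf0, Polynomial.degree_eq_natDegree hg0, hnd])
        hf0 hlc.symm
      have h4 := Polynomial.natDegree_le_natDegree this.le
      by_cases hz : β f - β (a * s ^ j) = 0
      · rw [hz]; simp
      · have := Polynomial.natDegree_lt_natDegree hz this
        omega
    have := T.add_mem (ih _ hlt) (T.mul_mem (hT a ha) (T.pow_mem hsT j))
    simpa using this

/-- quasi-principle pairs give trivial bundles after replacing
`𝔾ₐ` by `𝔾ₐ//ker b(t)`: if every `β(f) − f` lies in `⟨b(t)⟩` and
`(g, h^e)` is a (quasi-principle) `b(t)`-pair, then there is a `k`-algebra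
isomorphism `(A_h)^{𝔾ₐ}[T] ≃ A_h` restricting to the inclusion on invariants
with `β_h(φ(T)) = φ(T) + b(t)`. -/
theorem stmt14 {k : Type*} [Field k] [IsAlgClosed k]
    {A : Type*} [CommRing A] [IsDomain A] [Algebra k A]
    (hfg : Algebra.FiniteType k A)
    (β : A →ₐ[k] Polynomial A) (hβ : IsGaCoaction β)
    (b : Polynomial k) (hb : IsAdditivePoly b) (hb0 : b ≠ 0)
    (h : A) (hh0 : h ≠ 0) (hinv : β h = Polynomial.C h)
    (hquasi : ∀ f : A, β f - Polynomial.C f ∈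
      Ideal.span {b.map (algebraMap k A)})
    (g : A) (e : ℕ)
    (hpair : β g = Polynomial.C g +
      b.map (algebraMap k A) * Polynomial.C (h ^ e))
    (S : Type*) [CommRing S] [Algebra A S] [Algebra k S] [IsScalarTower k A S]
    [IsLocalization.Away h S]
    (βS : S →ₐ[k] Polynomial S) (hβS : IsGaCoaction βS)
    (hext : ∀ a : A, βS (algebraMap A S a) = (β a).map (algebraMap A S)) :
    ∃ φ : Polynomial ↥(AlgHom.equalizer βS (Polynomial.CAlgHom (R := k) (A := S)))
        ≃ₐ[k] S,
      (∀ x : ↥(AlgHom.equalizer βS (Polynomial.CAlgHom (R := k) (A := S))),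
        φ (Polynomial.C x) = (x : S)) ∧
      βS (φ Polynomial.X) =
        Polynomial.C (φ Polynomial.X) + b.map (algebraMap k S) := by
  classical
  have : IsDomain S := IsLocalization.isDomain_of_le_nonZeroDivisors (M := Submonoid.powers h) S
    (powers_le_nonZeroDivisors_of_noZeroDivisors hh0)
  have hbpos : 0 < b.natDegree := by
    rcases Nat.eq_zero_or_pos b.natDegree with h0 | h0
    · exfalso
      obtain ⟨c, hc⟩ := Polynomial.natDegree_eq_zero.mp h0
      subst hc
      unfold IsAdditivePoly at hb
      rw [coadd_C] at hb
      simp at hb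
      exact hb0 (by simp [hb])
    · exact h0
  have hkinj : Function.Injective (algebraMap k S) := (algebraMap k S).injective
  have hlc : b.leadingCoeff ≠ 0 := by simpa using hb0
  -- the slice
  have hu : IsUnit (algebraMap A S h) := IsLocalization.Away.algebraMap_isUnit h
  obtain ⟨w, hw⟩ := hu.exists_right_inv
  have hβh : βS (algebraMap A S h) = C (algebraMap A S h) := by rw [hext, hinv, map_C]
  have hβw : βS w = C w := by
    have h1 : C (algebraMap A S h) * βS w = 1 := by rw [← hβh, ← map_mul, hw, map_one]
    have h2 : C (algebraMap A S h) * C w = (1 : Polynomial S) := by rw [← C_mul, hw, C_1]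
    have h3 : C (algebraMap A S h) ≠ (0 : Polynomial S) := left_ne_zero_of_mul_eq_one h2
    exact mul_left_cancel₀ h3 (h1.trans h2.symm)
  have hmm : ∀ p : Polynomial k, (p.map (algebraMap k A)).map (algebraMap A S) =
      p.map (algebraMap k S) := by
    intro p
    rw [Polynomial.map_map, ← IsScalarTower.algebraMap_eq]
  obtain ⟨s, hs⟩ : ∃ s : S, βS s = C s + b.map (algebraMap k S) := by
    refine ⟨algebraMap A S g * w ^ e, ?_⟩
    rw [map_mul, map_pow, hβw, hext, hpair]
    simp only [Polynomial.map_add, Polynomial.map_mul, map_C, hmm, Polynomial.map_pow, C_mul, C_pow]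
    have h2 : C (algebraMap A S h) ^ e * C w ^ e = (1 : Polynomial S) := by
      rw [← mul_pow, ← C_mul, hw, C_1, one_pow]
    linear_combination (b.map (algebraMap k S)) * h2
  have hquasiS : ∀ f : S, b.map (algebraMap k S) ∣ βS f - C f := by
    intro f
    obtain ⟨⟨a, ⟨_, n, rfl⟩⟩, hn⟩ := IsLocalization.surj (Submonoid.powers h) f
    simp only [map_pow] at hn
    have hf : f = algebraMap A S a * w ^ n := by
      rw [← hn, mul_assoc, ← mul_pow, hw, one_pow, mul_one]
    obtain ⟨q, hq⟩ := Ideal.mem_span_singleton.mp (hquasi a)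
    refine ⟨q.map (algebraMap A S) * C w ^ n, ?_⟩
    have h5 := congrArg (Polynomial.map (algebraMap A S)) hq
    simp only [Polynomial.map_sub, Polynomial.map_mul, map_C, hmm] at h5
    rw [hf, map_mul, map_pow, hβw, hext, C_mul, C_pow]
    linear_combination C w ^ n * h5
  -- normalisation
  set v : k := b.leadingCoeff⁻¹ with hv
  have hv0 : v ≠ 0 := inv_ne_zero hlc
  set B := b.map (algebraMap k S) with hB
  set M := C (algebraMap k S v) * B with hMdef
  have hMmonic : M.Monic := by
    rw [Polynomial.Monic, hMdef, Polynomial.leadingCoeff_mul, Polynomial.leadingCoeff_C, hB,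
      Polynomial.leadingCoeff_map, ← map_mul, hv, inv_mul_cancel₀ hlc, map_one]
  have hv0' : algebraMap k S v ≠ 0 := by simpa using hv0
  have hBd : B.natDegree = b.natDegree := Polynomial.natDegree_map _
  have hMd : M.natDegree = b.natDegree := by
    rw [hMdef, Polynomial.natDegree_C_mul hv0', hBd]
  have hBadd : coaddSubst B = C B + B.map (C : S →+* Polynomial S) := by
    rw [hB, coadd_map, hb]
    simp only [Polynomial.map_add, map_C, Polynomial.map_map, Polynomial.coe_mapRingHom]
    congr 2
    ext x
    simp
  have hMadd : coaddSubst M = C M + M.map (C : S →+* Polynomial S) := by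
    rw [hMdef, coadd_mul, hBadd, coadd_C]
    simp only [Polynomial.map_mul, map_C, C_mul]
    ring
  have hMquasi : ∀ f : S, M ∣ βS f - C f := by
    intro f
    refine dvd_trans ⟨C (algebraMap k S b.leadingCoeff), ?_⟩ (hquasiS f)
    rw [hMdef, mul_comm, ← mul_assoc, ← C_mul, ← map_mul, hv, mul_inv_cancel₀ hlc, map_one, C_1,
      one_mul]
  have hMβ : M.map βS.toRingHom = M.map (C : S →+* Polynomial S) := by
    have e1 : βS.toRingHom.comp (algebraMap k S) = (C : S →+* Polynomial S).comp (algebraMap k S) := by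
      ext1 x
      exact βS.commutes x
    have e2 : M = (C v * b).map (algebraMap k S) := by simp [hMdef, hB]
    rw [e2, Polynomial.map_map, Polynomial.map_map, e1]
  have hdvd : ∀ f, M.natDegree ∣ (βS f).natDegree := by
    intro f
    refine deg_dvd M hMmonic (hMd ▸ hbpos) hMadd _ (βS f) le_rfl ?_
    rw [hβS.2 f, ← hMβ]
    have e3 : (βS f).map βS.toRingHom - C (βS f) = (βS f - C f).map βS.toRingHom := by
      rw [Polynomial.map_sub, map_C]; rfl
    rw [e3]
    exact Polynomial.map_dvd _ (hMquasi f)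
  -- the map
  let E := AlgHom.equalizer βS (Polynomial.CAlgHom (R := k) (A := S))
  let φ₀ : Polynomial E →ₐ[k] S := (Polynomial.aeval (R := E) s).restrictScalars k
  have hφC : ∀ x : E, φ₀ (C x) = (x : S) := fun x => Polynomial.aeval_C s x
  have hφX : φ₀ X = s := Polynomial.aeval_X (R := E) s
  have hsurj : Function.Surjective φ₀ := by
    intro f
    have hCE : ∀ x : S, βS x = C x → x ∈ φ₀.range := fun x hx => ⟨C ⟨x, hx⟩, hφC _⟩
    have hsr : algebraMap k S v * s ∈ φ₀.range :=
      φ₀.range.mul_mem (φ₀.range.algebraMap_mem v) ⟨X, hφX⟩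
    refine gen_all βS hβS M hMmonic (hMd ▸ hbpos) (algebraMap k S v * s) ?_ hdvd φ₀.range hCE hsr _ f
      le_rfl
    rw [map_mul, hs, βS.commutes, hMdef, C_mul, mul_add]
    rfl
  have hinj : Function.Injective φ₀ := by
    rw [injective_iff_map_eq_zero]
    intro p hp
    have h1 : βS (φ₀ p) = (p.map E.val.toRingHom).comp (C s + B) := by
      have e1 : φ₀ p = p.eval₂ E.val.toRingHom s := rfl
      rw [e1, Polynomial.comp, Polynomial.eval₂_map]
      have := Polynomial.hom_eval₂ p E.val.toRingHom βS.toRingHom s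
      refine this.trans ?_
      have e2 : βS.toRingHom.comp E.val.toRingHom = (C : S →+* Polynomial S).comp E.val.toRingHom := by
        ext1 x
        exact x.2
      rw [e2]
      congr 1
    rw [hp, map_zero] at h1
    have hd : (C s + B).natDegree = b.natDegree := by rw [Polynomial.natDegree_C_add, hBd]
    rcases Polynomial.comp_eq_zero_iff.mp h1.symm with h2 | ⟨_, h2⟩
    · exact (Polynomial.map_eq_zero_iff (f := E.val.toRingHom) Subtype.val_injective).mp h2
    · rw [h2, Polynomial.natDegree_C] at hd
      omega
  refine ⟨AlgEquiv.ofBijective φ₀ ⟨hinj, hsurj⟩, hφC, ?_⟩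
  have : (AlgEquiv.ofBijective φ₀ ⟨hinj, hsurj⟩) X = s := hφX
  rw [this]
  exact hs
end
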